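/- Let (A,G,α) be a C*-dynamical system with G discrete. If Φ is a completely positive map on A⋊_{α,r}G, then the function h_Φ : G → B(A) given by h_Φ(s)(a) = E(Φ(π(a)λ_s)λ_s*) is a completely positive Herz-Schur (A,G,α)-multiplier. -/

import Mathlib

noncomputable section

open scoped ComplexOrder
open Matrix
open scoped ENNReal

/-- Positivity of a matrix over a (possibly non-unital) C*-algebra:
`M` is positive iff it factors as `Nᴴ * N`. -/
def MatPos {R : Type*} [NonUnitalSemiring R] [StarRing R] {ν : Type*} [Fintype ν]
    (M : Matrix ν ν R) : Prop :=
  ∃ N : Matrix ν ν R, M = Nᴴ * N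

/-- A linear map between C*-algebras is completely positive if all its matrix
amplifications preserve positivity. -/
def IsCompletelyPositive {R S : Type*} [NonUnitalSemiring R] [StarRing R] [Module ℂ R]
    [NonUnitalSemiring S] [StarRing S] [Module ℂ S] (Φ : R →ₗ[ℂ] S) : Prop :=
  ∀ (n : ℕ) (M : Matrix (Fin n) (Fin n) R), MatPos M → MatPos (M.map Φ)

variable {H : Type*} [NormedAddCommGroup H] [InnerProductSpace ℂ H] [CompleteSpace H]

/-- The bounded operator on the Hilbert space `H ⊕₂ ⋯ ⊕₂ H` associated to an
operator-valued `n × n` matrix. -/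
def matOp {ν : Type*} [Fintype ν] (M : Matrix ν ν (H →L[ℂ] H)) :
    PiLp 2 (fun _ : ν => H) →L[ℂ] PiLp 2 (fun _ : ν => H) :=
  ((PiLp.continuousLinearEquiv 2 ℂ (fun _ : ν => H)).symm :
      (∀ _ : ν, H) →L[ℂ] PiLp 2 (fun _ : ν => H)) ∘L
    (ContinuousLinearMap.pi fun i =>
      (∑ j, (M i j) ∘L (ContinuousLinearMap.proj j)) ∘L
        ((PiLp.continuousLinearEquiv 2 ℂ (fun _ : ν => H)) :
          PiLp 2 (fun _ : ν => H) →L[ℂ] ∀ _ : ν, H))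

variable {H : Type*} [NormedAddCommGroup H] [InnerProductSpace ℂ H] [CompleteSpace H]
variable {X : Type*}

/-- Evaluation at a point, as a continuous linear map `ℓ²(X,H) → H`. -/
def lpEval (x : X) : lp (fun _ : X => H) 2 →L[ℂ] H :=
  LinearMap.mkContinuous
    { toFun := fun f => f x
      map_add' := fun f g => by
        have := lp.coeFn_add f g
        exact congrFun this x
      map_smul' := fun c f => by
        have := lp.coeFn_smul c f
        exact congrFun this x }
    1 (fun f => by
      simpa using lp.norm_apply_le_norm (by norm_num) f x)

/-- Inclusion of the `x`-th coordinate, as a continuous linear map `H → ℓ²(X,H)`. -/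
def lpSingle (x : X) : H →L[ℂ] lp (fun _ : X => H) 2 := by
  classical
  exact LinearMap.mkContinuous
    { toFun := fun ξ => lp.single 2 x ξ
      map_add' := fun ξ η => by
        apply lp.ext
        funext j
        by_cases h : j = x
        · subst h; simp [lp.single_apply_self]
        · simp [lp.single_apply_ne _ _ _ h, lp.coeFn_add]
      map_smul' := fun c ξ => by simp [lp.single_smul] }
    1 (fun ξ => by
      simpa using (lp.norm_single (p := 2) (by norm_num)
        (fun _ : X => ξ) x).le)

/-- The elementary operator `e_{x,y} ⊗ T` on `ℓ²(X,H)`. -/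
def elemOp (x y : X) (T : H →L[ℂ] H) :
    lp (fun _ : X => H) 2 →L[ℂ] lp (fun _ : X => H) 2 :=
  (lpSingle x) ∘L T ∘L (lpEval y)

/-- The operator `T_k` on `ℓ²(X,H)` associated with a finitely supported kernel
`k : X × X → B(H)`; it is (defined to be) `0` if `k` is not finitely supported. -/
def TOp (k : X × X → (H →L[ℂ] H)) :
    lp (fun _ : X => H) 2 →L[ℂ] lp (fun _ : X => H) 2 :=
  ∑ᶠ (p : X × X), elemOp p.1 p.2 (k p)

variable {G : Type*} [Group G]

/-- The left regular translation `λ_t` on `ℓ²(G,H)`. -/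
def lam (t : G) : lp (fun _ : G => H) 2 →L[ℂ] lp (fun _ : G => H) 2 :=
  LinearMap.mkContinuous
    { toFun := fun f =>
        ⟨fun s => f (t⁻¹ * s), by
          apply memℓp_gen
          have hf : Summable fun s => ‖f s‖ ^ (2 : ℝ≥0∞).toReal :=
            (lp.memℓp f).summable (by norm_num)
          exact ((Equiv.mulLeft t⁻¹).summable_iff
            (f := fun s => ‖f s‖ ^ (2 : ℝ≥0∞).toReal)).2 hf⟩
      map_add' := fun f g => by
        apply lp.ext; funext s
        exact congrFun (lp.coeFn_add f g) (t⁻¹ * s)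
      map_smul' := fun c f => by
        apply lp.ext; funext s
        exact congrFun (lp.coeFn_smul c f) (t⁻¹ * s) }
    1 (fun f => by
      rw [one_mul]
      refine lp.norm_le_of_tsum_le (by norm_num) (norm_nonneg f) ?_
      have h1 : ∑' (s : G), ‖f (t⁻¹ * s)‖ ^ (2 : ℝ≥0∞).toReal
          = ∑' (s : G), ‖f s‖ ^ (2 : ℝ≥0∞).toReal :=
        (Equiv.mulLeft t⁻¹).tsum_eq (fun s => ‖f s‖ ^ (2 : ℝ≥0∞).toReal)
      show ∑' (s : G), ‖f (t⁻¹ * s)‖ ^ (2 : ℝ≥0∞).toReal ≤ ‖f‖ ^ (2 : ℝ≥0∞).toReal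
      rw [h1, ← lp.norm_rpow_eq_tsum (by norm_num) f])

/-- The diagonal ("block multiplication") operator on `ℓ²(X,H)` associated with a
uniformly bounded family of operators. -/
def diagOp (T : X → (H →L[ℂ] H)) (C : ℝ) (hC : ∀ x, ‖T x‖ ≤ C) :
    lp (fun _ : X => H) 2 →L[ℂ] lp (fun _ : X => H) 2 := by
  have hC' : ∀ x, ‖T x‖ ≤ max C 0 := fun x => (hC x).trans (le_max_left _ _)
  have hr : (0:ℝ) < (2 : ℝ≥0∞).toReal := by norm_num
  have key : ∀ (f : lp (fun _ : X => H) 2) (x : X),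
      ‖T x (f x)‖ ^ (2 : ℝ≥0∞).toReal
        ≤ (max C 0) ^ (2 : ℝ≥0∞).toReal * ‖f x‖ ^ (2 : ℝ≥0∞).toReal := by
    intro f x
    have h1 : ‖T x (f x)‖ ≤ max C 0 * ‖f x‖ :=
      ((T x).le_opNorm (f x)).trans
        (mul_le_mul_of_nonneg_right (hC' x) (norm_nonneg _))
    calc ‖T x (f x)‖ ^ (2 : ℝ≥0∞).toReal
        ≤ (max C 0 * ‖f x‖) ^ (2 : ℝ≥0∞).toReal :=
          Real.rpow_le_rpow (norm_nonneg _) h1 hr.le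
      _ = (max C 0) ^ (2 : ℝ≥0∞).toReal * ‖f x‖ ^ (2 : ℝ≥0∞).toReal :=
          Real.mul_rpow (le_max_right _ _) (norm_nonneg _)
  have mem : ∀ f : lp (fun _ : X => H) 2, Memℓp (fun x => T x (f x)) 2 := by
    intro f
    apply memℓp_gen
    exact Summable.of_nonneg_of_le
      (fun x => Real.rpow_nonneg (norm_nonneg _) _) (key f)
      (((lp.memℓp f).summable hr).mul_left _)
  exact LinearMap.mkContinuous
    { toFun := fun f => ⟨fun x => T x (f x), mem f⟩
      map_add' := fun f g => by
        apply lp.ext; funext x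
        have := congrFun (lp.coeFn_add f g) x
        show T x ((f + g) x) = _
        rw [this]
        exact map_add (T x) (f x) (g x)
      map_smul' := fun c f => by
        apply lp.ext; funext x
        have := congrFun (lp.coeFn_smul c f) x
        show T x ((c • f) x) = _
        rw [this]
        simp [lp.coeFn_smul] }
    (max C 0) (fun f => by
      refine lp.norm_le_of_tsum_le hr (by positivity) ?_
      show ∑' (x : X), ‖T x (f x)‖ ^ (2 : ℝ≥0∞).toReal ≤ _
      calc ∑' (x : X), ‖T x (f x)‖ ^ (2 : ℝ≥0∞).toReal
          ≤ ∑' (x : X), (max C 0) ^ (2 : ℝ≥0∞).toReal * ‖f x‖ ^ (2 : ℝ≥0∞).toReal :=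
            Summable.tsum_le_tsum (key f)
              (Summable.of_nonneg_of_le
                (fun x => Real.rpow_nonneg (norm_nonneg _) _) (key f)
                (((lp.memℓp f).summable hr).mul_left _))
              (((lp.memℓp f).summable hr).mul_left _)
        _ = (max C 0) ^ (2 : ℝ≥0∞).toReal * ∑' (x : X), ‖f x‖ ^ (2 : ℝ≥0∞).toReal :=
            tsum_mul_left
        _ = (max C 0) ^ (2 : ℝ≥0∞).toReal * ‖f‖ ^ (2 : ℝ≥0∞).toReal := by
            rw [lp.norm_rpow_eq_tsum hr]
        _ = (max C 0 * ‖f‖) ^ (2 : ℝ≥0∞).toReal :=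
            (Real.mul_rpow (by positivity) (norm_nonneg _)).symm)

section CB

variable {A' B' : Type*} [AddCommMonoid A'] [Module ℂ A'] [AddCommMonoid B'] [Module ℂ B']
variable {K : Type*} [NormedAddCommGroup K] [InnerProductSpace ℂ K] [CompleteSpace K]

/-- All matrix amplifications of `Φ` are bounded by `C`, where matrices over the abstract
spaces are normed through the given embeddings into concrete operator algebras. -/
def CBBound (ιA : A' → (H →L[ℂ] H)) (ιB : B' → (K →L[ℂ] K))
    (Φ : A' →ₗ[ℂ] B') (C : ℝ) : Prop :=
  ∀ (n : ℕ) (M : Matrix (Fin n) (Fin n) A'),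
    ‖matOp (M.map (fun a => ιB (Φ a)))‖ ≤ C * ‖matOp (M.map ιA)‖

/-- Complete boundedness of a linear map, relative to embeddings of its domain and
codomain into concrete operator algebras. -/
def IsCB (ιA : A' → (H →L[ℂ] H)) (ιB : B' → (K →L[ℂ] K)) (Φ : A' →ₗ[ℂ] B') : Prop :=
  ∃ C : ℝ, 0 ≤ C ∧ CBBound ιA ιB Φ C

/-- The completely bounded norm of a linear map, relative to embeddings of its domain
and codomain into concrete operator algebras. -/
def cbNorm (ιA : A' → (H →L[ℂ] H)) (ιB : B' → (K →L[ℂ] K)) (Φ : A' →ₗ[ℂ] B') : ℝ :=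
  sInf { C : ℝ | 0 ≤ C ∧ CBBound ιA ιB Φ C }

end CB

section Schur

variable {A : Type*} [NonUnitalCStarAlgebra A]

/-- A *-representation is non-degenerate if the span of the vectors in its range is dense. -/
def NondegenerateRep {K : Type*} [NormedAddCommGroup K] [InnerProductSpace ℂ K]
    [CompleteSpace K] (ρ : A →⋆ₙₐ[ℂ] (K →L[ℂ] K)) : Prop :=
  Dense (Submodule.span ℂ {ξ : K | ∃ (a : A) (v : K), ρ a v = ξ} : Set K)

/-- A function `φ : X × X → CB(A, B(H))` is of positive type if it maps positive
matrices to positive matrices, entrywise. -/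
def PositiveType (φ : X → X → (A →ₗ[ℂ] (H →L[ℂ] H))) : Prop :=
  ∀ (m : ℕ) (x : Fin m → X) (a : Matrix (Fin m) (Fin m) A),
    MatPos a → MatPos (Matrix.of fun p q => φ (x p) (x q) (a p q))

/-- A kernel `k : X × X → A` is positive definite if all the matrices obtained by
sampling it at finitely many points are positive. -/
def PosDefKernel (k : X × X → A) : Prop :=
  ∀ (n : ℕ) (x : Fin n → X), MatPos (Matrix.of fun i j => k (x i, x j))

/-- The operator `T_k` on `ℓ²(X,H)` of a kernel `k : X × X → A`, via the embedding
`ι : A → B(H)` (it is `0` unless `k` is finitely supported). -/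
def TKer (ι : A →⋆ₙₐ[ℂ] (H →L[ℂ] H)) (k : X × X → A) :
    lp (fun _ : X => H) 2 →L[ℂ] lp (fun _ : X => H) 2 :=
  TOp (fun p => ι (k p))

/-- `C` is a complete bound for the Schur multiplication map `S_φ : T_k ↦ T_{φ·k}`,
tested on (matrices of) finitely supported kernels, which span a dense subspace of
`K(ℓ²(X)) ⊗ A`. -/
def SchurBound (ι : A →⋆ₙₐ[ℂ] (H →L[ℂ] H)) (φ : X → X → (A →ₗ[ℂ] (H →L[ℂ] H)))
    (C : ℝ) : Prop :=
  ∀ (n : ℕ) (k : Fin n → Fin n → (X × X → A)),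
    (∀ i j, (Function.support (k i j)).Finite) →
    ‖matOp (Matrix.of fun i j => TOp (fun p => φ p.1 p.2 (k i j p)))‖
      ≤ C * ‖matOp (Matrix.of fun i j => TKer ι (k i j))‖

/-- `φ` is a Schur `A`-multiplier: the map `S_φ : T_k ↦ T_{φ·k}` is completely bounded. -/
def IsSchurMultiplier (ι : A →⋆ₙₐ[ℂ] (H →L[ℂ] H))
    (φ : X → X → (A →ₗ[ℂ] (H →L[ℂ] H))) : Prop :=
  ∃ C : ℝ, 0 ≤ C ∧ SchurBound ι φ C

/-- The multiplier norm `‖φ‖_m = ‖S_φ‖_cb` of a Schur `A`-multiplier. -/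
def schurNorm (ι : A →⋆ₙₐ[ℂ] (H →L[ℂ] H))
    (φ : X → X → (A →ₗ[ℂ] (H →L[ℂ] H))) : ℝ :=
  sInf { C : ℝ | 0 ≤ C ∧ SchurBound ι φ C }

/-- Complete positivity of the map `S_φ : K(ℓ²(X)) ⊗ A → K(ℓ²(X)) ⊗ B(H)`, tested on
(matrices of) finitely supported kernels. -/
def SchurCP (ι : A →⋆ₙₐ[ℂ] (H →L[ℂ] H)) (φ : X → X → (A →ₗ[ℂ] (H →L[ℂ] H))) : Prop :=
  ∀ (n : ℕ) (k : Fin n → Fin n → (X × X → A)),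
    (∀ i j, (Function.support (k i j)).Finite) →
    MatPos (Matrix.of fun i j => TKer ι (k i j)) →
    MatPos (Matrix.of fun i j => TOp (fun p => φ p.1 p.2 (k i j p)))

end Schur

section Dynamics

variable {A : Type*} [NonUnitalCStarAlgebra A]

/-- `α` is an action of the group `G` on `A` by *-automorphisms. -/
def IsAction (α : G → A ≃⋆ₐ[ℂ] A) : Prop :=
  (∀ a, α 1 a = a) ∧ ∀ s t : G, ∀ a : A, α (s * t) a = α s (α t a)

/-- A *-automorphism of `A`, as a `ℂ`-linear map. -/
def autLin (e : A ≃⋆ₐ[ℂ] A) : A →ₗ[ℂ] A :=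
  { toFun := e
    map_add' := fun a b => map_add e a b
    map_smul' := fun c a => map_smul e c a }

/-- The representation `π` of `A` on `ℓ²(G,H)`: `(π(a)ξ)(s) = α_{s⁻¹}(a)(ξ(s))`. -/
def piRep (ι : A →⋆ₙₐ[ℂ] (H →L[ℂ] H)) (α : G → A ≃⋆ₐ[ℂ] A) (a : A) :
    lp (fun _ : G => H) 2 →L[ℂ] lp (fun _ : G => H) 2 :=
  diagOp (fun s => ι (α s⁻¹ a)) ‖a‖ (fun s =>
    (NonUnitalStarAlgHom.norm_apply_le ι (α s⁻¹ a)).trans_eq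
      (StarAlgEquiv.norm_map (α s⁻¹) a))

/-- The reduced crossed product `A ⋊_{α,r} G`, realised concretely on `ℓ²(G,H)` as the
norm closure of the linear span of the operators `π(a)λ_t`. -/
def CrossedSet (ι : A →⋆ₙₐ[ℂ] (H →L[ℂ] H)) (α : G → A ≃⋆ₐ[ℂ] A) :
    Set (lp (fun _ : G => H) 2 →L[ℂ] lp (fun _ : G => H) 2) :=
  closure (Submodule.span ℂ
    {x | ∃ (a : A) (t : G), x = piRep ι α a * lam t} : Set _)

/-- `E` is the canonical conditional expectation of the reduced crossed product onto `A`: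
it is characterised by `ι (E x) = (x)_{e,e}`, the `(e,e)` matrix entry of `x`. -/
def IsCondExp (ι : A →⋆ₙₐ[ℂ] (H →L[ℂ] H)) (α : G → A ≃⋆ₐ[ℂ] A)
    (E : (lp (fun _ : G => H) 2 →L[ℂ] lp (fun _ : G => H) 2) →ₗ[ℂ] A) : Prop :=
  ∀ x ∈ CrossedSet ι α, ι (E x) = (lpEval (1 : G)) ∘L x ∘L (lpSingle (1 : G))

/-- The defining property of the map `S_F` associated with `F : G → CB(A)`:
`S_F(π(a)λ_s) = π(F(s)(a))λ_s`. -/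
def HSGenProp (ι : A →⋆ₙₐ[ℂ] (H →L[ℂ] H)) (α : G → A ≃⋆ₐ[ℂ] A)
    (F : G → (A →ₗ[ℂ] A))
    (Φ : (lp (fun _ : G => H) 2 →L[ℂ] lp (fun _ : G => H) 2) →ₗ[ℂ]
         (lp (fun _ : G => H) 2 →L[ℂ] lp (fun _ : G => H) 2)) : Prop :=
  ∀ (a : A) (s : G), Φ (piRep ι α a * lam s) = piRep ι α (F s a) * lam s

/-- `Φ` maps the reduced crossed product into itself and, on matrices over the reduced
crossed product, all amplifications of `Φ` are bounded by `C`. -/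
def CBBoundOnCrossed (ι : A →⋆ₙₐ[ℂ] (H →L[ℂ] H)) (α : G → A ≃⋆ₐ[ℂ] A)
    (Φ : (lp (fun _ : G => H) 2 →L[ℂ] lp (fun _ : G => H) 2) →ₗ[ℂ]
         (lp (fun _ : G => H) 2 →L[ℂ] lp (fun _ : G => H) 2)) (C : ℝ) : Prop :=
  ∀ (n : ℕ) (M : Matrix (Fin n) (Fin n)
      (lp (fun _ : G => H) 2 →L[ℂ] lp (fun _ : G => H) 2)),
    (∀ i j, M i j ∈ CrossedSet ι α) →
      ‖matOp (M.map Φ)‖ ≤ C * ‖matOp M‖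

/-- `Φ` is completely positive on the reduced crossed product: matrices over the crossed
product which are positive are mapped to positive matrices. -/
def CPOnCrossed (ι : A →⋆ₙₐ[ℂ] (H →L[ℂ] H)) (α : G → A ≃⋆ₐ[ℂ] A)
    (Φ : (lp (fun _ : G => H) 2 →L[ℂ] lp (fun _ : G => H) 2) →ₗ[ℂ]
         (lp (fun _ : G => H) 2 →L[ℂ] lp (fun _ : G => H) 2)) : Prop :=
  (∀ x ∈ CrossedSet ι α, Φ x ∈ CrossedSet ι α) ∧
  ∀ (n : ℕ) (M : Matrix (Fin n) (Fin n)
      (lp (fun _ : G => H) 2 →L[ℂ] lp (fun _ : G => H) 2)),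
    (∀ i j, M i j ∈ CrossedSet ι α) → MatPos M → MatPos (M.map Φ)

/-- `F : G → CB(A)` is a Herz-Schur `(A,G,α)`-multiplier: the map `S_F` determined by
`S_F(π(a)λ_s) = π(F(s)(a))λ_s` extends to a completely bounded map on `A ⋊_{α,r} G`. -/
def IsHerzSchurMultiplier (ι : A →⋆ₙₐ[ℂ] (H →L[ℂ] H)) (α : G → A ≃⋆ₐ[ℂ] A)
    (F : G → (A →ₗ[ℂ] A)) : Prop :=
  ∃ Φ, HSGenProp ι α F Φ ∧ (∀ x ∈ CrossedSet ι α, Φ x ∈ CrossedSet ι α) ∧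
    ∃ C : ℝ, 0 ≤ C ∧ CBBoundOnCrossed ι α Φ C

/-- `F : G → CB(A)` is a completely positive Herz-Schur `(A,G,α)`-multiplier: the map
`S_F` extends to a completely positive (hence completely bounded) map on `A ⋊_{α,r} G`. -/
def IsHerzSchurMultiplierCP (ι : A →⋆ₙₐ[ℂ] (H →L[ℂ] H)) (α : G → A ≃⋆ₐ[ℂ] A)
    (F : G → (A →ₗ[ℂ] A)) : Prop :=
  ∃ Φ, HSGenProp ι α F Φ ∧ CPOnCrossed ι α Φ ∧
    ∃ C : ℝ, 0 ≤ C ∧ CBBoundOnCrossed ι α Φ C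

/-- The function `N(F) : G × G → CB(A)`, `N(F)(s,t)(a) = α_{s⁻¹}(F(st⁻¹)(α_s(a)))`. -/
def NF (α : G → A ≃⋆ₐ[ℂ] A) (F : G → (A →ₗ[ℂ] A)) : G → G → (A →ₗ[ℂ] A) :=
  fun s t => (autLin (α s⁻¹)) ∘ₗ (F (s * t⁻¹)) ∘ₗ (autLin (α s))

end Dynamics

section Trace

variable {A : Type*} [NonUnitalCStarAlgebra A]

/-- `τ` is a positive linear functional. -/
def IsPositiveFunctional (τ : A →ₗ[ℂ] ℂ) : Prop :=
  ∀ a : A, 0 ≤ τ (star a * a)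

/-- `τ` is tracial. -/
def IsTracial (τ : A →ₗ[ℂ] ℂ) : Prop :=
  ∀ a b : A, τ (a * b) = τ (b * a)

/-- `τ` is faithful. -/
def IsFaithfulFunctional (τ : A →ₗ[ℂ] ℂ) : Prop :=
  ∀ a : A, τ (star a * a) = 0 → a = 0

/-- The `L²`-norm `‖a‖_{2,τ} = τ(a*a)^{1/2}` associated with a positive functional `τ`. -/
def l2norm (τ : A →ₗ[ℂ] ℂ) (a : A) : ℝ :=
  Real.sqrt (τ (star a * a)).re

/-- A map `Φ : A → A` is `L²`-bounded by `C` with respect to `τ`. -/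
def L2BoundedBy (τ : A →ₗ[ℂ] ℂ) (Φ : A →ₗ[ℂ] A) (C : ℝ) : Prop :=
  ∀ a : A, l2norm τ (Φ a) ≤ C * l2norm τ a

/-- A map `Φ : A → A` is `L²`-bounded with respect to `τ`, i.e. it extends to a bounded
operator `T_Φ` on `L²(A,τ)`. -/
def L2Bounded (τ : A →ₗ[ℂ] ℂ) (Φ : A →ₗ[ℂ] A) : Prop :=
  ∃ C : ℝ, 0 ≤ C ∧ L2BoundedBy τ Φ C

/-- The norm of the extension `T_Φ` of `Φ` to `L²(A,τ)`. -/
def l2OpNorm (τ : A →ₗ[ℂ] ℂ) (Φ : A →ₗ[ℂ] A) : ℝ :=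
  sInf { C : ℝ | 0 ≤ C ∧ L2BoundedBy τ Φ C }

/-- `Φ` is `L²`-compact with respect to `τ`: the image under `Φ` of the `L²`-unit ball of
`A` is totally bounded in the `L²`-norm; equivalently, the extension `T_Φ` of `Φ` to
`L²(A,τ)` is a compact operator. -/
def L2Compact (τ : A →ₗ[ℂ] ℂ) (Φ : A →ₗ[ℂ] A) : Prop :=
  ∀ ε : ℝ, 0 < ε → ∃ S : Finset A, ∀ a : A, l2norm τ a ≤ 1 →
    ∃ b ∈ S, l2norm τ (Φ a - b) < ε

end Trace

section Props

variable {A : Type*} [CStarAlgebra A]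

/-- The pair `(A,τ)` has the C*-algebra Haagerup property (Definition 3.1, Dong). -/
def CStarHaagerup (τ : A →ₗ[ℂ] ℂ) : Prop :=
  ∃ (I : Type) (_ : Nonempty I) (_ : SemilatticeSup I) (Φ : I → (A →ₗ[ℂ] A)),
    (∀ i, Φ i 1 = 1) ∧
    (∀ i, IsCompletelyPositive (Φ i)) ∧
    (∀ i (a : A), τ (Φ i (star a * a)) ≤ τ (star a * a)) ∧
    (∀ i, L2Compact τ (Φ i)) ∧
    (∀ a : A, Filter.Tendsto (fun i => l2norm τ (Φ i a - a)) Filter.atTop (nhds 0))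

/-- `A` is a nuclear C*-algebra: there is a net of finite-rank completely positive
contractions converging to the identity in the point-norm topology. -/
def NuclearCStarAlgebra (A : Type*) [NonUnitalCStarAlgebra A] : Prop :=
  ∃ (I : Type) (_ : Nonempty I) (_ : SemilatticeSup I) (Φ : I → (A →ₗ[ℂ] A)),
    (∀ i, IsCompletelyPositive (Φ i)) ∧
    (∀ i (a : A), ‖Φ i a‖ ≤ ‖a‖) ∧
    (∀ i, FiniteDimensional ℂ (LinearMap.range (Φ i))) ∧
    (∀ a : A, Filter.Tendsto (fun i => ‖Φ i a - a‖) Filter.atTop (nhds 0))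

/-- A discrete group `G` has the Haagerup property: there is a net of normalised
positive-definite functions on `G`, vanishing at infinity, converging pointwise to `1`. -/
def GroupHaagerup (G : Type*) [Group G] : Prop :=
  ∃ (I : Type) (_ : Nonempty I) (_ : SemilatticeSup I) (φ : I → G → ℂ),
    (∀ i, φ i 1 = 1) ∧
    (∀ i (n : ℕ) (s : Fin n → G) (μ : Fin n → ℂ),
      0 ≤ ∑ k, ∑ l, (starRingEnd ℂ) (μ k) * φ i ((s k)⁻¹ * s l) * μ l) ∧
    (∀ i, ∀ ε : ℝ, 0 < ε → ∃ S : Finset G, ∀ s ∉ S, ‖φ i s‖ ≤ ε) ∧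
    (∀ s : G, Filter.Tendsto (fun i => φ i s) Filter.atTop (nhds 1))

end Props

section More

variable {A : Type*} [NonUnitalCStarAlgebra A]

/-- A star homomorphism, as a `ℂ`-linear map. -/
def iotaLin {B : Type*} [NonUnitalCStarAlgebra B] (ι : A →⋆ₙₐ[ℂ] B) : A →ₗ[ℂ] B :=
  { toFun := ι
    map_add' := fun a b => map_add ι a b
    map_smul' := fun c a => map_smul ι c a }

/-- A function `φ : X × X → CB(A)` with values in the maps on `A` is of positive type. -/
def PositiveTypeA (φ : X → X → (A →ₗ[ℂ] A)) : Prop :=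
  ∀ (m : ℕ) (x : Fin m → X) (a : Matrix (Fin m) (Fin m) A),
    MatPos a → MatPos (Matrix.of fun p q => φ (x p) (x q) (a p q))

/-- The representation `π` of `A` on `ℓ²(G,H)`, as a linear map. -/
def piRepLin (ι : A →⋆ₙₐ[ℂ] (H →L[ℂ] H)) (α : G → A ≃⋆ₐ[ℂ] A) :
    A →ₗ[ℂ] (lp (fun _ : G => H) 2 →L[ℂ] lp (fun _ : G => H) 2) :=
  { toFun := piRep ι α
    map_add' := fun a b => by
      apply ContinuousLinearMap.ext; intro f
      apply lp.ext; funext s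
      have h1 : (((piRep ι α a + piRep ι α b) f :
          lp (fun _ : G => H) 2) : ∀ _ : G, H) s
          = ((piRep ι α a f : ∀ _ : G, H) s) + ((piRep ι α b f : ∀ _ : G, H) s) := by
        rw [ContinuousLinearMap.add_apply]
        exact congrFun (lp.coeFn_add (piRep ι α a f) (piRep ι α b f)) s
      show ι (α s⁻¹ (a + b)) (f s) = _
      rw [h1]
      show _ = ι (α s⁻¹ a) (f s) + ι (α s⁻¹ b) (f s)
      rw [map_add (α s⁻¹), map_add ι, ContinuousLinearMap.add_apply]
    map_smul' := fun c a => by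
      apply ContinuousLinearMap.ext; intro f
      apply lp.ext; funext s
      have h1 : (((c • piRep ι α a) f :
          lp (fun _ : G => H) 2) : ∀ _ : G, H) s
          = c • ((piRep ι α a f : ∀ _ : G, H) s) := by
        rw [ContinuousLinearMap.smul_apply]
        exact congrFun (lp.coeFn_smul c (piRep ι α a f)) s
      show ι (α s⁻¹ (c • a)) (f s) = _
      rw [RingHom.id_apply, h1]
      show _ = c • ι (α s⁻¹ a) (f s)
      rw [map_smul (α s⁻¹), map_smul ι, ContinuousLinearMap.smul_apply] }

/-- The completely bounded norm of a map defined on the reduced crossed product. -/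
def cbNormOnCrossed (ι : A →⋆ₙₐ[ℂ] (H →L[ℂ] H)) (α : G → A ≃⋆ₐ[ℂ] A)
    (Φ : (lp (fun _ : G => H) 2 →L[ℂ] lp (fun _ : G => H) 2) →ₗ[ℂ]
         (lp (fun _ : G => H) 2 →L[ℂ] lp (fun _ : G => H) 2)) : ℝ :=
  sInf { C : ℝ | 0 ≤ C ∧ CBBoundOnCrossed ι α Φ C }

/-- The `L²`-norm `‖x‖_{2,τ'}` on the reduced crossed product induced by the trace
`τ' = τ ∘ E`. -/
def l2normCr (τ : A →ₗ[ℂ] ℂ)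
    (E : (lp (fun _ : G => H) 2 →L[ℂ] lp (fun _ : G => H) 2) →ₗ[ℂ] A)
    (x : lp (fun _ : G => H) 2 →L[ℂ] lp (fun _ : G => H) 2) : ℝ :=
  Real.sqrt (τ (E (star x * x))).re

/-- The map `h_Φ : G → CB(A)` associated with a map `Φ` on the reduced crossed product:
`h_Φ(s)(a) = E(Φ(π(a)λ_s)λ_s*)`. -/
def hMap (ι : A →⋆ₙₐ[ℂ] (H →L[ℂ] H)) (α : G → A ≃⋆ₐ[ℂ] A)
    (E : (lp (fun _ : G => H) 2 →L[ℂ] lp (fun _ : G => H) 2) →ₗ[ℂ] A)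
    (Φ : (lp (fun _ : G => H) 2 →L[ℂ] lp (fun _ : G => H) 2) →ₗ[ℂ]
         (lp (fun _ : G => H) 2 →L[ℂ] lp (fun _ : G => H) 2))
    (s : G) : A →ₗ[ℂ] A :=
  E ∘ₗ (LinearMap.mulRight ℂ (star (lam s))) ∘ₗ Φ ∘ₗ
    (LinearMap.mulRight ℂ (lam (H := H) s)) ∘ₗ piRepLin ι α

end More

section BigProps

open Filter

variable {A : Type*} [CStarAlgebra A]

/-- The Haagerup property for the `C*`-dynamical system `(A,G,α,τ)` (Definition 3.3). -/
def DynHaagerup (ι : A →⋆ₙₐ[ℂ] (H →L[ℂ] H)) (α : G → A ≃⋆ₐ[ℂ] A)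
    (τ : A →ₗ[ℂ] ℂ) : Prop :=
  ∃ (I : Type) (_ : Nonempty I) (_ : SemilatticeSup I) (F : I → G → (A →ₗ[ℂ] A)),
    (∀ i, IsHerzSchurMultiplierCP ι α (F i)) ∧
    (∀ i, F i 1 1 = 1) ∧
    (∀ i (a : A), τ (F i 1 (star a * a)) ≤ τ (star a * a)) ∧
    (∀ i (t : G), L2Compact τ (F i t)) ∧
    (∀ i, ∀ ε : ℝ, 0 < ε → ∃ S : Finset G, ∀ s ∉ S, l2OpNorm τ (F i s) ≤ ε) ∧
    (∀ (t : G) (a : A),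
      Tendsto (fun i => l2norm τ (F i t a - a)) atTop (nhds 0))

/-- The C*-algebra Haagerup property for the reduced crossed product `A ⋊_{α,r} G`
endowed with the induced trace `τ' = τ ∘ E` (Definition 3.1). -/
def CrossedCStarHaagerup (ι : A →⋆ₙₐ[ℂ] (H →L[ℂ] H)) (α : G → A ≃⋆ₐ[ℂ] A)
    (τ : A →ₗ[ℂ] ℂ)
    (E : (lp (fun _ : G => H) 2 →L[ℂ] lp (fun _ : G => H) 2) →ₗ[ℂ] A) : Prop :=
  ∃ (I : Type) (_ : Nonempty I) (_ : SemilatticeSup I)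
    (Φ : I → ((lp (fun _ : G => H) 2 →L[ℂ] lp (fun _ : G => H) 2) →ₗ[ℂ]
              (lp (fun _ : G => H) 2 →L[ℂ] lp (fun _ : G => H) 2))),
    (∀ i, Φ i 1 = 1) ∧
    (∀ i, CPOnCrossed ι α (Φ i)) ∧
    (∀ i, ∀ x ∈ CrossedSet ι α, τ (E (Φ i (star x * x))) ≤ τ (E (star x * x))) ∧
    (∀ i, ∀ ε : ℝ, 0 < ε →
      ∃ S : Finset (lp (fun _ : G => H) 2 →L[ℂ] lp (fun _ : G => H) 2),
        ∀ x ∈ CrossedSet ι α, l2normCr τ E x ≤ 1 →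
          ∃ b ∈ S, l2normCr τ E (Φ i x - b) < ε) ∧
    (∀ x ∈ CrossedSet ι α,
      Tendsto (fun i => l2normCr τ E (Φ i x - x)) atTop (nhds 0))

end BigProps

section Nuc

open Filter

variable {A : Type*} [NonUnitalCStarAlgebra A]

/-- Nuclearity of the reduced crossed product `A ⋊_{α,r} G`: there is a net of
finite-rank completely positive contractions on it converging to the identity in the
point-norm topology. -/
def CrossedNuclear (ι : A →⋆ₙₐ[ℂ] (H →L[ℂ] H)) (α : G → A ≃⋆ₐ[ℂ] A) : Prop :=
  ∃ (I : Type) (_ : Nonempty I) (_ : SemilatticeSup I)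
    (Φ : I → ((lp (fun _ : G => H) 2 →L[ℂ] lp (fun _ : G => H) 2) →ₗ[ℂ]
              (lp (fun _ : G => H) 2 →L[ℂ] lp (fun _ : G => H) 2))),
    (∀ i, CPOnCrossed ι α (Φ i)) ∧
    (∀ i, ∀ x ∈ CrossedSet ι α, ‖Φ i x‖ ≤ ‖x‖) ∧
    (∀ i, FiniteDimensional ℂ
      (Submodule.span ℂ ((fun x => Φ i x) '' CrossedSet ι α))) ∧
    (∀ x ∈ CrossedSet ι α, Tendsto (fun i => ‖Φ i x - x‖) atTop (nhds 0))

/-- Nuclearity of the `C*`-dynamical system `(A,G,α)` (Definition 4.2): a net of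
completely positive, finitely supported Herz-Schur multipliers, with `‖F_i(e)‖_cb ≤ 1`,
with finite-rank values, converging to the identity pointwise in norm. -/
def DynNuclear (ι : A →⋆ₙₐ[ℂ] (H →L[ℂ] H)) (α : G → A ≃⋆ₐ[ℂ] A) : Prop :=
  ∃ (I : Type) (_ : Nonempty I) (_ : SemilatticeSup I) (F : I → G → (A →ₗ[ℂ] A)),
    (∀ i, IsHerzSchurMultiplierCP ι α (F i)) ∧
    (∀ i, (Function.support (F i)).Finite) ∧
    (∀ i, CBBound (fun a => ι a) (fun a => ι a) (F i 1) 1) ∧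
    (∀ i (s : G), FiniteDimensional ℂ (LinearMap.range (F i s))) ∧
    (∀ (s : G) (a : A), Tendsto (fun i => ‖F i s a - a‖) atTop (nhds 0))

end Nuc

section Amen

open Filter

variable {A : Type*} [CStarAlgebra A]

/-- Amenability of the action `α` of a discrete group `G` on a unital C*-algebra `A`
(Definition 4.5): a net of finitely supported functions `T_i : G → Z(A)⁺` with
`Σ_s T_i(s)² = 1` and `‖Σ_s (T_i(s) - α_t(T_i(t⁻¹s)))*(T_i(s) - α_t(T_i(t⁻¹s)))‖ → 0`. -/
def AmenableAction {G : Type*} [Group G] (α : G → A ≃⋆ₐ[ℂ] A) : Prop :=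
  ∃ (I : Type) (_ : Nonempty I) (_ : SemilatticeSup I) (T : I → G → A),
    (∀ i, (Function.support (T i)).Finite) ∧
    (∀ i (s : G) (c : A), Commute (T i s) c) ∧
    (∀ i (s : G), ∃ b : A, T i s = star b * b) ∧
    (∀ i, ∑ᶠ s : G, T i s * T i s = 1) ∧
    (∀ t : G, Tendsto (fun i =>
        ‖∑ᶠ s : G, star (T i s - α t (T i (t⁻¹ * s))) *
          (T i s - α t (T i (t⁻¹ * s)))‖) atTop (nhds 0))

end Amen

universe u v w

/-- Data for a Stinespring-type representation of an operator-valued function on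
`X × X`: a Hilbert space `K`, a *-representation `ρ : A → B(K)` and
families of operators `V, W : X → B(H,K)`. -/
structure OpValuedRep (A : Type u) [NonUnitalCStarAlgebra A]
    (H : Type v) [NormedAddCommGroup H] [InnerProductSpace ℂ H] [CompleteSpace H]
    (X : Type w) where
  /-- the Hilbert space of the representation -/
  K : Type (max u v w)
  [nacg : NormedAddCommGroup K]
  [ips : InnerProductSpace ℂ K]
  [cpl : CompleteSpace K]
  /-- the representation -/
  ρ : A →⋆ₙₐ[ℂ] (K →L[ℂ] K)
  /-- the left family of operators -/
  V : X → (H →L[ℂ] K)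
  /-- the right family of operators -/
  W : X → (H →L[ℂ] K)

attribute [instance] OpValuedRep.nacg OpValuedRep.ips OpValuedRep.cpl

end
noncomputable section
open scoped ComplexOrder ENNReal
open Matrix

/-!
The multiplier `S_h` attached to `h = h_Φ` should be `x ↦ V*(Φ ⊗ id)(δ(x))V`, where
`δ(π(a)λ_s) = π(a)λ_s ⊗ λ_s` (Fell absorption) and `V` is the isometry `e_p ⊗ v ↦ e_p ⊗ v ⊗ e_p`.
No tensor product is needed: for finite `F ⊆ G`, the `F`-section of `δ(x)` is the matrix of Fourier
components `π(E(x λ_s*))λ_s` with `s = p q⁻¹`, `p, q ∈ F`, and it is a direct sum of compressions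
of `x` to the translates `F u`. It is therefore positive when `x` is, and has norm at most `‖x‖`.
Applying `Φ` entrywise and reading off the `(p, q)` matrix entries gives the `F`-section of
`S_h(x)`.

The positive map `Φ` is bounded, and it is completely bounded because `‖M‖ e² ± e M e ≥ 0` for
self-adjoint matrices `M` and for self-adjoint `e` in an approximate unit. This makes the norms of
the `F`-sections of `S_h(x)` uniformly bounded, so `S_h` extends from finite sums to the crossed
product.
-/

/-! ### Matrices of operators -/

section OperatorMatrices

variable {K : Type*} [NormedAddCommGroup K] [InnerProductSpace ℂ K]
variable {ν : Type*} [Fintype ν]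

theorem nonneg_iff_forall_inner_nonneg (T : K →L[ℂ] K) :
    0 ≤ T ↔ ∀ ξ, 0 ≤ inner ℂ ξ (T ξ) := by
  rw [ContinuousLinearMap.nonneg_iff_isPositive]
  refine ⟨fun hT ξ => hT.inner_nonneg_right ξ, fun hT => ?_⟩
  rw [ContinuousLinearMap.isPositive_iff_complex]
  intro ξ
  have hξ : 0 ≤ inner ℂ (T ξ) ξ := by
    rw [← inner_conj_symm]
    exact star_nonneg_iff.2 (hT ξ)
  exact ⟨Complex.conj_eq_iff_re.1 (IsSelfAdjoint.of_nonneg hξ), (Complex.nonneg_iff.1 hξ).1⟩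

theorem norm_inner_apply_le_opNorm (T : K →L[ℂ] K) (η ξ : K) :
    ‖inner ℂ η (T ξ)‖ ≤ ‖T‖ * ((‖η‖ ^ 2 + ‖ξ‖ ^ 2) / 2) :=
  calc ‖inner ℂ η (T ξ)‖ ≤ ‖η‖ * (‖T‖ * ‖ξ‖) :=
        (norm_inner_le_norm _ _).trans (by gcongr; exact T.le_opNorm ξ)
    _ ≤ ‖T‖ * ((‖η‖ ^ 2 + ‖ξ‖ ^ 2) / 2) := by
        nlinarith [mul_nonneg (norm_nonneg T) (sq_nonneg (‖η‖ - ‖ξ‖))]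

theorem opNorm_le_of_norm_inner_le (T : K →L[ℂ] K) {D : ℝ} (hD : 0 ≤ D)
    (hT : ∀ η ξ, ‖inner ℂ η (T ξ)‖ ≤ D * ((‖η‖ ^ 2 + ‖ξ‖ ^ 2) / 2)) : ‖T‖ ≤ D := by
  refine ContinuousLinearMap.opNorm_le_of_unit_norm hD fun ξ hξ => ?_
  by_cases hTξ : T ξ = 0
  · simpa [hTξ] using hD
  calc ‖T ξ‖ = ‖inner ℂ (((‖T ξ‖⁻¹ : ℝ) : ℂ) • T ξ) (T ξ)‖ := by
        simp [inner_self_eq_norm_sq_to_K, sq, hTξ]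
    _ ≤ D * ((‖((‖T ξ‖⁻¹ : ℝ) : ℂ) • T ξ‖ ^ 2 + ‖ξ‖ ^ 2) / 2) := hT _ _
    _ = D := by simp [norm_smul, hTξ, hξ]

theorem matOp_apply (M : Matrix ν ν (K →L[ℂ] K)) (ξ : PiLp 2 fun _ : ν => K) (i : ν) :
    matOp M ξ i = ∑ j, M i j (ξ j) := by
  simp [matOp]

theorem inner_matOp (M : Matrix ν ν (K →L[ℂ] K)) (η ξ : PiLp 2 fun _ : ν => K) :
    inner ℂ η (matOp M ξ) = ∑ i, ∑ j, inner ℂ (η i) (M i j (ξ j)) := by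
  simp only [PiLp.inner_apply, matOp_apply, inner_sum]

theorem matOp_add (M N : Matrix ν ν (K →L[ℂ] K)) : matOp (M + N) = matOp M + matOp N := by
  ext ξ i
  simp [matOp_apply, Finset.sum_add_distrib]

theorem matOp_smul (c : ℂ) (M : Matrix ν ν (K →L[ℂ] K)) : matOp (c • M) = c • matOp M := by
  ext ξ i
  simp [matOp_apply, Finset.smul_sum]

theorem matOp_neg (M : Matrix ν ν (K →L[ℂ] K)) : matOp (-M) = -matOp M := by
  ext ξ i
  simp [matOp_apply]

theorem matOp_mul (M N : Matrix ν ν (K →L[ℂ] K)) : matOp (M * N) = matOp M * matOp N := by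
  ext ξ i
  simp only [matOp_apply, Matrix.mul_apply, _root_.sum_apply, mul_apply_eq_comp, map_sum]
  exact Finset.sum_comm

theorem matOp_one [DecidableEq ν] : matOp (1 : Matrix ν ν (K →L[ℂ] K)) = 1 := by
  ext ξ i
  rw [matOp_apply, Finset.sum_eq_single i] <;> simp +contextual [one_apply_ne']

theorem matOp_single_apply [DecidableEq ν] (M : Matrix ν ν (K →L[ℂ] K)) (i j : ν) (v : K) :
    matOp M (PiLp.single 2 j v) i = M i j v := by
  rw [matOp_apply, Finset.sum_eq_single j] <;> simp +contextual

theorem matOp_injective : Function.Injective (matOp : Matrix ν ν (K →L[ℂ] K) → _) := by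
  classical
  intro M N hMN
  ext i j v
  rw [← matOp_single_apply M, ← matOp_single_apply N, hMN]

theorem matOp_surjective : Function.Surjective (matOp : Matrix ν ν (K →L[ℂ] K) → _) := by
  classical
  intro T
  refine ⟨Matrix.of fun i j => PiLp.proj 2 (fun _ : ν => K) i ∘L T ∘L
    (PiLp.continuousLinearEquiv 2 ℂ (fun _ : ν => K)).symm.toContinuousLinearMap ∘L
      ContinuousLinearMap.single ℂ (fun _ : ν => K) j, ?_⟩
  ext ξ i
  have hξ : ∑ j, PiLp.single 2 j (ξ j) = ξ := by
    ext j
    simp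
  conv_rhs => rw [← hξ, map_sum]
  simp [matOp_apply]

theorem norm_matOp_diagonal_le [DecidableEq ν] (T : K →L[ℂ] K) :
    ‖matOp (diagonal fun _ : ν => T)‖ ≤ ‖T‖ := by
  refine ContinuousLinearMap.opNorm_le_bound _ (norm_nonneg T) fun ξ => ?_
  have hTξ (i : ν) : matOp (diagonal fun _ : ν => T) ξ i = T (ξ i) := by
    rw [matOp_apply, Finset.sum_eq_single i] <;> simp +contextual [diagonal_apply_ne']
  refine le_of_sq_le_sq ?_ (by positivity)
  rw [PiLp.norm_sq_eq_of_L2, mul_pow, PiLp.norm_sq_eq_of_L2, Finset.mul_sum]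
  gcongr with i
  rw [hTξ, ← mul_pow]
  gcongr
  exact T.le_opNorm _

theorem norm_entry_le_norm_matOp (M : Matrix ν ν (K →L[ℂ] K)) (i j : ν) :
    ‖M i j‖ ≤ ‖matOp M‖ := by
  classical
  refine ContinuousLinearMap.opNorm_le_bound _ (ContinuousLinearMap.opNorm_nonneg _) fun v => ?_
  calc ‖M i j v‖ = ‖matOp M (PiLp.single 2 j v) i‖ := by rw [matOp_single_apply]
    _ ≤ ‖matOp M (PiLp.single 2 j v)‖ := PiLp.norm_apply_le _ i
    _ ≤ ‖matOp M‖ * ‖v‖ := by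
        rw [← PiLp.norm_single 2 (fun _ : ν => K) j v]
        exact (matOp M).le_opNorm _

theorem norm_matOp_le_of_tendsto {I : Type*} {l : Filter I} [l.NeBot]
    {M : I → Matrix ν ν (K →L[ℂ] K)} {N : Matrix ν ν (K →L[ℂ] K)} {c : ℝ}
    (hMN : ∀ i j, Filter.Tendsto (fun k => M k i j) l (nhds (N i j)))
    (hM : ∀ᶠ k in l, ‖matOp (M k)‖ ≤ c) : ‖matOp N‖ ≤ c := by
  obtain ⟨k, hk⟩ := hM.exists
  refine ContinuousLinearMap.opNorm_le_bound _ ((ContinuousLinearMap.opNorm_nonneg _).trans hk)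
    fun ξ => ?_
  have hξ : Filter.Tendsto (fun k => matOp (M k) ξ) l (nhds (matOp N ξ)) := by
    rw [(PiLp.homeomorph 2 fun _ : ν => K).isInducing.tendsto_nhds_iff, tendsto_pi_nhds]
    intro i
    change Filter.Tendsto (fun k => matOp (M k) ξ i) l (nhds (matOp N ξ i))
    simp only [matOp_apply]
    exact tendsto_finsetSum _ fun j _ =>
      ((ContinuousLinearMap.apply ℂ K (ξ j)).continuous.tendsto _).comp (hMN i j)
  exact le_of_tendsto hξ.norm (hM.mono fun k hk => (matOp (M k)).le_of_opNorm_le hk ξ)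

theorem MatPos.conjTranspose_mul_mul {R : Type*} [NonUnitalSemiring R] [StarRing R]
    {M : Matrix ν ν R} (hM : MatPos M) (B : Matrix ν ν R) : MatPos (Bᴴ * M * B) := by
  obtain ⟨N, rfl⟩ := hM
  exact ⟨N * B, by simp only [conjTranspose_mul, Matrix.mul_assoc]⟩

theorem MatPos.submatrix {R : Type*} [NonUnitalSemiring R] [StarRing R] {μ : Type*}
    [Fintype μ] {M : Matrix ν ν R} (hM : MatPos M) (e : μ ≃ ν) : MatPos (M.submatrix e e) := by
  obtain ⟨N, rfl⟩ := hM
  exact ⟨N.submatrix e e, by rw [conjTranspose_submatrix, submatrix_mul_equiv]⟩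

variable [CompleteSpace K]

theorem matOp_conjTranspose (M : Matrix ν ν (K →L[ℂ] K)) : matOp Mᴴ = star (matOp M) := by
  refine (ContinuousLinearMap.eq_adjoint_iff _ _).2 fun η ξ => ?_
  simp only [PiLp.inner_apply, matOp_apply, inner_sum, sum_inner, Matrix.conjTranspose_apply,
    ContinuousLinearMap.star_eq_adjoint, ContinuousLinearMap.adjoint_inner_left]
  exact Finset.sum_comm

theorem norm_matOp_conjTranspose (M : Matrix ν ν (K →L[ℂ] K)) : ‖matOp Mᴴ‖ = ‖matOp M‖ := by
  rw [matOp_conjTranspose, ContinuousLinearMap.star_eq_adjoint, LinearIsometryEquiv.norm_map]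

theorem nonneg_iff_exists_eq_star_mul_self (T : K →L[ℂ] K) : 0 ≤ T ↔ ∃ S, T = star S * S :=
  CStarAlgebra.nonneg_iff_eq_star_mul_self

theorem matPos_iff_nonneg_matOp (M : Matrix ν ν (K →L[ℂ] K)) : MatPos M ↔ 0 ≤ matOp M := by
  rw [nonneg_iff_exists_eq_star_mul_self, matOp_surjective.exists]
  simp only [← matOp_conjTranspose, ← matOp_mul, matOp_injective.eq_iff, MatPos]

theorem matPos_iff_forall_inner_nonneg (M : Matrix ν ν (K →L[ℂ] K)) :
    MatPos M ↔ ∀ ξ, 0 ≤ inner ℂ ξ (matOp M ξ) := by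
  rw [matPos_iff_nonneg_matOp, nonneg_iff_forall_inner_nonneg]

end OperatorMatrices

/-! ### Completely positive maps on C*-algebras of operators -/

section CompletelyPositive

variable {K L : Type*} [NormedAddCommGroup K] [InnerProductSpace ℂ K] [CompleteSpace K]
  [NormedAddCommGroup L] [InnerProductSpace ℂ L] [CompleteSpace L]
variable {ν : Type*} [Fintype ν]

/-- Complete positivity of the restriction of `Φ` to a *-algebra `𝒞` of operators. As in
`CPOnCrossed`, a map on `𝒞` is encoded by a linear map defined on all operators. -/
def IsCPOn (𝒞 : NonUnitalStarSubalgebra ℂ (K →L[ℂ] K))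
    (Φ : (K →L[ℂ] K) →ₗ[ℂ] (L →L[ℂ] L)) : Prop :=
  ∀ (n : ℕ) (M : Matrix (Fin n) (Fin n) (K →L[ℂ] K)),
    (∀ i j, M i j ∈ 𝒞) → MatPos M → MatPos (M.map Φ)

theorem norm_le_of_nonneg_add_of_nonneg_sub {X Y : K →L[ℂ] K} (hadd : 0 ≤ Y + X)
    (hsub : 0 ≤ Y - X) : ‖X‖ ≤ 3 * ‖Y‖ := by
  have hle : Y + X ≤ (2 : ℝ) • Y := by
    rw [two_smul]
    gcongr
    exact sub_nonneg.1 hsub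
  calc ‖X‖ = ‖(Y + X) - Y‖ := by rw [add_sub_cancel_left]
    _ ≤ ‖Y + X‖ + ‖Y‖ := norm_sub_le _ _
    _ ≤ ‖(2 : ℝ) • Y‖ + ‖Y‖ := by
        gcongr
        exact CStarAlgebra.norm_le_norm_of_nonneg_of_le hadd hle
    _ = 3 * ‖Y‖ := by
        rw [norm_smul, Real.norm_two]
        ring

theorem nonneg_norm_smul_one_add {T : K →L[ℂ] K} (hT : IsSelfAdjoint T) :
    0 ≤ (‖T‖ : ℂ) • (1 : K →L[ℂ] K) + T := by
  rw [Complex.coe_smul, ← Algebra.algebraMap_eq_smul_one, ← neg_le_iff_add_nonneg']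
  exact hT.neg_algebraMap_norm_le_self

theorem matPos_norm_smul_diagonal_add_conj [DecidableEq ν] {M : Matrix ν ν (K →L[ℂ] K)}
    (hM : Mᴴ = M) {e : K →L[ℂ] K} (he : star e = e) :
    MatPos ((‖matOp M‖ : ℂ) • diagonal (fun _ => e * e) + M.map fun m => e * m * e) := by
  have hpos : MatPos ((‖matOp M‖ : ℂ) • 1 + M) := by
    rw [matPos_iff_nonneg_matOp, matOp_add, matOp_smul, matOp_one]
    exact nonneg_norm_smul_one_add (by rw [IsSelfAdjoint, ← matOp_conjTranspose, hM])
  convert hpos.conjTranspose_mul_mul (diagonal fun _ => e) using 1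
  have hconj : (diagonal fun _ : ν => e)ᴴ = diagonal fun _ => e := by
    simp only [diagonal_conjTranspose, Pi.star_def, he]
  rw [hconj, Matrix.mul_add, Matrix.add_mul, Matrix.mul_smul, Matrix.smul_mul, Matrix.mul_one,
    diagonal_mul_diagonal]
  congr 1
  ext i j : 1
  rw [mul_diagonal, diagonal_mul, map_apply]

theorem exists_norm_le_of_map_star_mul_self_nonneg {R : Type*} [NonUnitalCStarAlgebra R]
    (f : R →ₗ[ℂ] (L →L[ℂ] L)) (hf : ∀ x : R, 0 ≤ f (star x * x)) :
    ∃ C : ℝ, 0 ≤ C ∧ ∀ x, ‖f x‖ ≤ C * ‖x‖ := by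
  let : PartialOrder R := CStarAlgebra.spectralOrder R
  have : StarOrderedRing R := CStarAlgebra.spectralOrderedRing R
  have hf_nonneg (x : R) (hx : 0 ≤ x) : 0 ≤ f x := by
    obtain ⟨y, rfl⟩ := CStarAlgebra.nonneg_iff_eq_star_mul_self.1 hx
    exact hf y
  obtain ⟨C, hC⟩ := PositiveLinearMap.exists_norm_apply_le (PositiveLinearMap.mk₀ f hf_nonneg)
  exact ⟨C, C.2, hC⟩

theorem exists_selfAdjoint_approximateUnit (R : Type*) [NonUnitalCStarAlgebra R] :
    ∃ l : Filter R, l.IsApproximateUnit ∧ (∀ᶠ e in l, ‖e‖ ≤ 1) ∧ ∀ᶠ e in l, star e = e := by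
  let : PartialOrder R := CStarAlgebra.spectralOrder R
  have : StarOrderedRing R := CStarAlgebra.spectralOrderedRing R
  have h := CStarAlgebra.increasingApproximateUnit R
  exact ⟨_, h.toIsApproximateUnit, h.eventually_norm, h.eventually_star_eq⟩

theorem tendsto_mul_mul_self_of_isApproximateUnit {R : Type*} [NonUnitalNormedRing R]
    {l : Filter R} (hl : l.IsApproximateUnit) (hnorm : ∀ᶠ e in l, ‖e‖ ≤ 1) (m : R) :
    Filter.Tendsto (fun e => e * m * e) l (nhds m) := by
  have hdiff : Filter.Tendsto (fun e => e * (m * e - m)) l (nhds 0) := by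
    refine squeeze_zero_norm' ?_ (tendsto_iff_norm_sub_tendsto_zero.1 (hl.tendsto_mul_left m))
    filter_upwards [hnorm] with e he
    exact (norm_mul_le _ _).trans (mul_le_of_le_one_left (norm_nonneg _) he)
  simpa [mul_sub, mul_assoc] using hdiff.add (hl.tendsto_mul_right m)

namespace IsCPOn

variable {𝒞 : NonUnitalStarSubalgebra ℂ (K →L[ℂ] K)} {Φ : (K →L[ℂ] K) →ₗ[ℂ] (L →L[ℂ] L)}

theorem matPos_map (hΦ : IsCPOn 𝒞 Φ) {M : Matrix ν ν (K →L[ℂ] K)} (hM : ∀ i j, M i j ∈ 𝒞)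
    (hpos : MatPos M) : MatPos (M.map Φ) := by
  let e := Fintype.equivFin ν
  have h := hΦ _ (M.submatrix e.symm e.symm) (fun i j => hM _ _) (hpos.submatrix e.symm)
  simpa [← submatrix_map] using h.submatrix e

theorem map_star_mul_self_nonneg (hΦ : IsCPOn 𝒞 Φ) {x : K →L[ℂ] K} (hx : x ∈ 𝒞) :
    0 ≤ Φ (star x * x) := by
  have h := hΦ.matPos_map (M := Matrix.of fun _ _ : Unit => star x * x)
    (fun _ _ => mul_mem (star_mem hx) hx) ⟨Matrix.of fun _ _ => x, by ext; simp [Matrix.mul_apply]⟩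
  obtain ⟨N, hN⟩ := h
  have := congrFun₂ hN () ()
  simp only [map_apply, of_apply, Matrix.mul_apply, Finset.univ_unique, Finset.sum_singleton,
    conjTranspose_apply] at this
  rw [this]
  exact star_mul_self_nonneg _

theorem nonneg_norm_smul_matOp_diagonal_add (hΦ : IsCPOn 𝒞 Φ) [DecidableEq ν]
    {M : Matrix ν ν (K →L[ℂ] K)} (hM : ∀ i j, M i j ∈ 𝒞) (hMsa : Mᴴ = M)
    {e : K →L[ℂ] K} (he : e ∈ 𝒞) (hesa : star e = e) :
    0 ≤ (‖matOp M‖ : ℂ) • matOp (diagonal fun _ => Φ (e * e)) +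
      matOp (M.map fun m => Φ (e * m * e)) := by
  have hmem (i j : ν) : ((‖matOp M‖ : ℂ) • diagonal (fun _ => e * e) +
      M.map (fun m => e * m * e) : Matrix ν ν (K →L[ℂ] K)) i j ∈ 𝒞 := by
    have hdiag : diagonal (fun _ => e * e) i j ∈ 𝒞 := by
      rw [diagonal_apply]
      split_ifs
      exacts [mul_mem he he, zero_mem _]
    exact add_mem (SMulMemClass.smul_mem _ hdiag) (mul_mem (mul_mem he (hM i j)) he)
  have h := hΦ.matPos_map hmem (matPos_norm_smul_diagonal_add_conj hMsa hesa)
  rw [matPos_iff_nonneg_matOp] at h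
  rw [← matOp_smul, ← matOp_add]
  convert h using 2
  ext i j : 1
  simp [diagonal_apply, apply_ite Φ]

theorem norm_matOp_map_conj_le (hΦ : IsCPOn 𝒞 Φ) {M : Matrix ν ν (K →L[ℂ] K)}
    (hM : ∀ i j, M i j ∈ 𝒞) (hMsa : Mᴴ = M) {e : K →L[ℂ] K} (he : e ∈ 𝒞) (hesa : star e = e) :
    ‖matOp (M.map fun m => Φ (e * m * e))‖ ≤ 3 * (‖matOp M‖ * ‖Φ (e * e)‖) := by
  classical
  have hnorm : ‖matOp (-M)‖ = ‖matOp M‖ := by rw [matOp_neg, norm_neg]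
  have hneg : (-M).map (fun m => Φ (e * m * e)) = -M.map fun m => Φ (e * m * e) := by
    ext i j : 1
    simp
  have hsub := hΦ.nonneg_norm_smul_matOp_diagonal_add (M := -M)
    (fun i j => neg_mem (hM i j)) (by rw [conjTranspose_neg, hMsa]) he hesa
  rw [hnorm, hneg, matOp_neg, ← sub_eq_add_neg] at hsub
  calc ‖matOp (M.map fun m => Φ (e * m * e))‖
      ≤ 3 * ‖(‖matOp M‖ : ℂ) • matOp (diagonal fun _ : ν => Φ (e * e))‖ :=
        norm_le_of_nonneg_add_of_nonneg_sub
          (hΦ.nonneg_norm_smul_matOp_diagonal_add hM hMsa he hesa) hsub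
    _ ≤ 3 * (‖matOp M‖ * ‖Φ (e * e)‖) := by
        rw [norm_smul, Complex.norm_real, norm_norm]
        gcongr
        exact norm_matOp_diagonal_le _

variable [IsClosed (𝒞 : Set (K →L[ℂ] K))]

theorem exists_norm_le (hΦ : IsCPOn 𝒞 Φ) : ∃ C : ℝ, 0 ≤ C ∧ ∀ x ∈ 𝒞, ‖Φ x‖ ≤ C * ‖x‖ := by
  obtain ⟨C, hC₀, hC⟩ := exists_norm_le_of_map_star_mul_self_nonneg
    (Φ ∘ₗ 𝒞.toNonUnitalSubalgebra.toSubmodule.subtype : 𝒞 →ₗ[ℂ] (L →L[ℂ] L))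
    fun x => hΦ.map_star_mul_self_nonneg x.2
  exact ⟨C, hC₀, fun x hx => hC ⟨x, hx⟩⟩

theorem continuousOn (hΦ : IsCPOn 𝒞 Φ) : ContinuousOn Φ 𝒞 := by
  obtain ⟨C, -, hC⟩ := hΦ.exists_norm_le
  rw [continuousOn_iff_continuous_domRestrict]
  exact ((Φ ∘ₗ 𝒞.toNonUnitalSubalgebra.toSubmodule.subtype).mkContinuous C
    fun x => hC x x.2).continuous

theorem norm_matOp_map_le_of_conjTranspose_eq (hΦ : IsCPOn 𝒞 Φ) {C : ℝ} (hC₀ : 0 ≤ C)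
    (hC : ∀ x ∈ 𝒞, ‖Φ x‖ ≤ C * ‖x‖) {M : Matrix ν ν (K →L[ℂ] K)} (hM : ∀ i j, M i j ∈ 𝒞)
    (hMsa : Mᴴ = M) : ‖matOp (M.map Φ)‖ ≤ 3 * (‖matOp M‖ * C) := by
  obtain ⟨l, hunit, hnorm, hstar⟩ := exists_selfAdjoint_approximateUnit 𝒞
  have := hunit.neBot
  let Φ𝒞 : 𝒞 →L[ℂ] (L →L[ℂ] L) :=
    (Φ ∘ₗ 𝒞.toNonUnitalSubalgebra.toSubmodule.subtype).mkContinuous C fun x => hC x x.2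
  refine norm_matOp_le_of_tendsto (l := l) (M := fun e => M.map fun m => Φ (e * m * e))
    (fun i j => ?_) ?_
  · let m : 𝒞 := ⟨M i j, hM i j⟩
    exact (Φ𝒞.continuous.tendsto m).comp (tendsto_mul_mul_self_of_isApproximateUnit hunit hnorm m)
  · filter_upwards [hnorm, hstar] with e he hesa
    have hee : ‖Φ (e * e)‖ ≤ C := by
      calc ‖Φ (e * e)‖ ≤ C * ‖e * e‖ := hC _ (e * e).2
        _ ≤ C * (1 * 1) := by
            gcongr
            exact (norm_mul_le e e).trans (by gcongr)
        _ = C := by ring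
    refine (hΦ.norm_matOp_map_conj_le hM hMsa e.2 (congrArg Subtype.val hesa)).trans ?_
    gcongr

theorem norm_matOp_map_le (hΦ : IsCPOn 𝒞 Φ) {C : ℝ} (hC₀ : 0 ≤ C)
    (hC : ∀ x ∈ 𝒞, ‖Φ x‖ ≤ C * ‖x‖) {M : Matrix ν ν (K →L[ℂ] K)} (hM : ∀ i j, M i j ∈ 𝒞) :
    ‖matOp (M.map Φ)‖ ≤ 6 * C * ‖matOp M‖ := by
  let S (z : ℂ) : Matrix ν ν (K →L[ℂ] K) := z • M + (z • M)ᴴ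
  have hS (z : ℂ) (hz : ‖z‖ = 1) : ‖matOp ((S z).map Φ)‖ ≤ 3 * (2 * ‖matOp M‖ * C) := by
    have hmem (i j : ν) : S z i j ∈ 𝒞 :=
      add_mem (SMulMemClass.smul_mem z (hM i j)) (star_mem (SMulMemClass.smul_mem z (hM j i)))
    have hsa : (S z)ᴴ = S z := by
      simp only [S, conjTranspose_add, conjTranspose_conjTranspose, add_comm]
    have hnorm : ‖matOp (S z)‖ ≤ 2 * ‖matOp M‖ := by
      rw [matOp_add]
      refine (norm_add_le _ _).trans_eq ?_
      rw [norm_matOp_conjTranspose, matOp_smul, norm_smul, hz, one_mul, two_mul]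
    refine (hΦ.norm_matOp_map_le_of_conjTranspose_eq hC₀ hC hmem hsa).trans ?_
    gcongr
  have hdecomp : M.map Φ = (2⁻¹ : ℂ) • ((S 1).map Φ + (-Complex.I) • (S Complex.I).map Φ) := by
    ext i j : 1
    have hij : M i j = (2⁻¹ : ℂ) • (S 1 i j + (-Complex.I) • S Complex.I i j) := by
      simp only [S, Matrix.add_apply, conjTranspose_apply, Matrix.smul_apply, star_smul, smul_add,
        smul_smul]
      simp only [mul_one, star_one, neg_mul, mul_neg, neg_neg, neg_smul, Complex.I_mul_I,
        RCLike.star_def, Complex.conj_I]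
      module
    simp only [map_apply, Matrix.smul_apply, Matrix.add_apply, hij, map_smul, map_add]
  calc ‖matOp (M.map Φ)‖
      ≤ 2⁻¹ * (‖matOp ((S 1).map Φ)‖ + ‖matOp ((S Complex.I).map Φ)‖) := by
        rw [hdecomp, matOp_smul, matOp_add, matOp_smul, norm_smul, norm_inv, Complex.norm_ofNat]
        gcongr
        refine (norm_add_le _ _).trans_eq ?_
        rw [norm_smul, norm_neg, Complex.norm_I, one_mul]
    _ ≤ 2⁻¹ * (3 * (2 * ‖matOp M‖ * C) + 3 * (2 * ‖matOp M‖ * C)) := by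
        gcongr
        exacts [hS 1 norm_one, hS _ Complex.norm_I]
    _ = 6 * C * ‖matOp M‖ := by ring

end IsCPOn

end CompletelyPositive

/-! ### The reduced crossed product -/

section CrossedProduct

variable {H : Type*} [NormedAddCommGroup H] [InnerProductSpace ℂ H] {G : Type*}

local notation "𝔹" => lp (fun _ : G => H) 2 →L[ℂ] lp (fun _ : G => H) 2

theorem lpSingle_apply_self (s : G) (v : H) : lpSingle s v s = v := by
  classical
  exact lp.single_apply_self (E := fun _ : G => H) 2 s v

theorem lpSingle_apply_of_ne {s t : G} (h : t ≠ s) (v : H) : lpSingle s v t = 0 := by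
  classical
  exact lp.single_apply_ne (E := fun _ : G => H) 2 s v h

theorem inner_lpSingle_left (s : G) (v : H) (f : lp (fun _ : G => H) 2) :
    inner ℂ (lpSingle s v) f = inner ℂ v (f s) := by
  classical
  exact lp.inner_single_left (𝕜 := ℂ) s v f

theorem norm_lpSingle (s : G) (v : H) : ‖lpSingle s v‖ = ‖v‖ := by
  classical
  exact lp.norm_single (E := fun _ : G => H) (p := 2) (by norm_num) s v

/-- The `(p, q)` matrix entry of an operator on `ℓ²(G, H)`. -/
def entry (p q : G) : 𝔹 →L[ℂ] (H →L[ℂ] H) :=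
  (ContinuousLinearMap.compL ℂ H (lp (fun _ : G => H) 2) H (lpEval p)).comp
    ((ContinuousLinearMap.compL ℂ H (lp (fun _ : G => H) 2) (lp (fun _ : G => H) 2)).flip
      (lpSingle q))

theorem entry_apply (p q : G) (x : 𝔹) (v : H) : entry p q x v = x (lpSingle q v) p := rfl

variable [Group G]

theorem lam_apply (t : G) (f : lp (fun _ : G => H) 2) (s : G) : lam t f s = f (t⁻¹ * s) := rfl

theorem lam_mul_lam (s t : G) : (lam s * lam t : 𝔹) = lam (s * t) := by
  ext f r
  simp only [mul_apply_eq_comp, lam_apply, _root_.mul_inv_rev, mul_assoc]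

variable [CompleteSpace H]

theorem star_lam (t : G) : star (lam t : 𝔹) = lam t⁻¹ := by
  refine ((ContinuousLinearMap.eq_adjoint_iff _ _).2 fun f g => ?_).symm
  have h := lp.hasSum_inner (𝕜 := ℂ) f (lam t g)
  rw [← (Equiv.mulLeft t).hasSum_iff] at h
  refine (lp.hasSum_inner (𝕜 := ℂ) (lam t⁻¹ f) g).unique ?_
  simpa [Function.comp_def, lam_apply] using h

variable {A : Type*} [NonUnitalCStarAlgebra A] (ι : A →⋆ₙₐ[ℂ] (H →L[ℂ] H)) (α : G → A ≃⋆ₐ[ℂ] A)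

theorem piRep_apply (a : A) (f : lp (fun _ : G => H) 2) (s : G) :
    piRep ι α a f s = ι (α s⁻¹ a) (f s) := rfl

theorem piRep_mul (a b : A) : piRep ι α (a * b) = piRep ι α a * piRep ι α b := by
  ext f s
  simp only [mul_apply_eq_comp, piRep_apply, map_mul]

theorem star_piRep (a : A) : star (piRep ι α a) = piRep ι α (star a) := by
  refine ((ContinuousLinearMap.eq_adjoint_iff _ _).2 fun f g => ?_).symm
  refine (lp.hasSum_inner (𝕜 := ℂ) (piRep ι α (star a) f) g).unique ?_
  convert lp.hasSum_inner (𝕜 := ℂ) f (piRep ι α a g) using 2 with s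
  rw [piRep_apply, piRep_apply, map_star, map_star, ContinuousLinearMap.star_eq_adjoint,
    ContinuousLinearMap.adjoint_inner_left]

theorem norm_piRep_le (a : A) : ‖piRep ι α a‖ ≤ ‖a‖ := by
  unfold piRep diagOp
  refine (LinearMap.mkContinuous_norm_le _ (le_max_right _ _) _).trans ?_
  rw [max_eq_left (norm_nonneg a)]

theorem continuous_piRep : Continuous (piRep ι α) :=
  AddMonoidHomClass.continuous_of_bound (piRepLin ι α) 1 fun a =>
    (norm_piRep_le ι α a).trans_eq (one_mul _).symm

variable {α} in
theorem lam_mul_piRep (hα : IsAction α) (t : G) (a : A) :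
    lam t * piRep ι α a = piRep ι α (α t a) * lam t := by
  ext f s
  simp only [mul_apply_eq_comp, piRep_apply, lam_apply, ← hα.2, _root_.mul_inv_rev, inv_inv]

theorem entry_piRep_mul_lam [DecidableEq G] (a : A) (s p q : G) :
    entry p q (piRep ι α a * lam s) = if p = s * q then ι (α p⁻¹ a) else 0 := by
  ext v
  rw [entry_apply, mul_apply_eq_comp, piRep_apply, lam_apply]
  split_ifs with h
  · rw [h, inv_mul_cancel_left, lpSingle_apply_self]
  · rw [lpSingle_apply_of_ne (fun h' => h (eq_mul_of_inv_mul_eq h')), map_zero]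
    rfl

/-- The operators `π(a)λ_t`, whose closed linear span is `CrossedSet ι α`. -/
def crossedGenerators : Set 𝔹 :=
  {x | ∃ (a : A) (t : G), x = piRep ι α a * lam t}

theorem piRep_mul_lam_mem (a : A) (s : G) : piRep ι α a * lam s ∈ CrossedSet ι α :=
  subset_closure (Submodule.subset_span ⟨a, s, rfl⟩)

variable {ι α}

theorem mul_lam_mem {x : 𝔹} (hx : x ∈ CrossedSet ι α) (t : G) : x * lam t ∈ CrossedSet ι α := by
  refine map_mem_closure (f := fun y => y * lam t) (by fun_prop) hx fun y hy => ?_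
  simp only [SetLike.mem_coe] at hy ⊢
  induction hy using Submodule.span_induction with
  | mem y hy =>
    obtain ⟨a, s, rfl⟩ := hy
    exact Submodule.subset_span ⟨a, s * t, by rw [mul_assoc, lam_mul_lam]⟩
  | zero => simp
  | add y z _ _ hy hz => simpa only [add_mul] using add_mem hy hz
  | smul c y _ hy => simpa only [smul_mul_assoc] using Submodule.smul_mem _ c hy

theorem eqOn_crossedSet {Z : Type*} [NormedAddCommGroup Z] [NormedSpace ℂ Z] {f g : 𝔹 →ₗ[ℂ] Z}
    (hf : ContinuousOn f (CrossedSet ι α)) (hg : ContinuousOn g (CrossedSet ι α))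
    (hfg : ∀ a s, f (piRep ι α a * lam s) = g (piRep ι α a * lam s)) :
    Set.EqOn f g (CrossedSet ι α) := by
  refine Set.EqOn.of_subset_closure (LinearMap.eqOn_span ?_) hf hg subset_closure subset_rfl
  rintro _ ⟨a, s, rfl⟩
  exact hfg a s

theorem span_generators_mul_mem (hα : IsAction α) {x y : 𝔹}
    (hx : x ∈ Submodule.span ℂ (crossedGenerators ι α))
    (hy : y ∈ Submodule.span ℂ (crossedGenerators ι α)) :
    x * y ∈ Submodule.span ℂ (crossedGenerators ι α) := by
  have h := Submodule.mul_mem_mul hx hy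
  rw [Submodule.span_mul_span] at h
  refine Submodule.span_mono ?_ h
  rintro _ ⟨_, ⟨a, s, rfl⟩, _, ⟨b, t, rfl⟩, rfl⟩
  refine ⟨a * α s b, s * t, ?_⟩
  change piRep ι α a * lam s * (piRep ι α b * lam t) = _
  rw [mul_assoc, ← mul_assoc (lam s), lam_mul_piRep ι hα, piRep_mul, ← lam_mul_lam]
  simp only [mul_assoc]

theorem span_generators_star_mem (hα : IsAction α) {x : 𝔹}
    (hx : x ∈ Submodule.span ℂ (crossedGenerators ι α)) :
    star x ∈ Submodule.span ℂ (crossedGenerators ι α) := by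
  induction hx using Submodule.span_induction with
  | mem x hx =>
    obtain ⟨a, s, rfl⟩ := hx
    refine Submodule.subset_span ⟨α s⁻¹ (star a), s⁻¹, ?_⟩
    rw [star_mul, star_piRep, star_lam, lam_mul_piRep ι hα]
  | zero => simp
  | add x y _ _ hx hy => simpa using add_mem hx hy
  | smul c x _ hx => simpa using Submodule.smul_mem _ (star c) hx

variable (ι) in
/-- The reduced crossed product `CrossedSet ι α`, as a closed *-subalgebra of `B(ℓ²(G, H))`. -/
def crossedAlgebra (hα : IsAction α) : NonUnitalStarSubalgebra ℂ 𝔹 :=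
  NonUnitalStarSubalgebra.topologicalClosure
    { Submodule.span ℂ (crossedGenerators ι α) with
      mul_mem' := span_generators_mul_mem hα
      star_mem' := span_generators_star_mem hα }

instance isClosed_crossedAlgebra (hα : IsAction α) : IsClosed (crossedAlgebra ι hα : Set 𝔹) :=
  isClosed_closure

variable {E : (lp (fun _ : G => H) 2 →L[ℂ] lp (fun _ : G => H) 2) →ₗ[ℂ] A}

theorem condExp_piRep_mul_lam [DecidableEq G] (hisom : ∀ a : A, ‖ι a‖ = ‖a‖) (hα : IsAction α)
    (hE : IsCondExp ι α E) (a : A) (s : G) :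
    E (piRep ι α a * lam s) = if s = 1 then a else 0 := by
  have hι : Isometry ι := AddMonoidHomClass.isometry_of_norm (iotaLin ι) hisom
  apply hι.injective
  rw [hE _ (piRep_mul_lam_mem ι α a s)]
  refine (entry_piRep_mul_lam ι α a s 1 1).trans ?_
  simp only [mul_one, inv_one, hα.1, eq_comm (a := (1 : G)), apply_ite ι, map_zero]

theorem continuousOn_condExp (hisom : ∀ a : A, ‖ι a‖ = ‖a‖) (hE : IsCondExp ι α E) :
    ContinuousOn E (CrossedSet ι α) := by
  have hι : Isometry ι := AddMonoidHomClass.isometry_of_norm (iotaLin ι) hisom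
  rw [← hι.comp_continuousOn_iff]
  exact (entry 1 1).continuous.continuousOn.congr hE

end CrossedProduct

/-! ### Fourier components -/

section Bands

theorem hasSum_norm_sq_mul_left {H : Type*} [NormedAddCommGroup H] {G : Type*} [Group G]
    (f : lp (fun _ : G => H) 2) (p : G) : HasSum (fun u => ‖f (p * u)‖ ^ 2) (‖f‖ ^ 2) := by
  have h := lp.hasSum_norm (p := 2) (by norm_num) f
  rw [← (Equiv.mulLeft p).hasSum_iff] at h
  simpa [Function.comp_def] using h

theorem sum_norm_apply_sq_le {H : Type*} [NormedAddCommGroup H] {G : Type*} {ν : Type*} [Fintype ν]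
    (F : Finset G) (ξ : PiLp 2 fun _ : ν => lp (fun _ : G => H) 2) :
    ∑ k : ν × F, ‖ξ k.1 k.2‖ ^ 2 ≤ ‖ξ‖ ^ 2 := by
  rw [PiLp.norm_sq_eq_of_L2, Fintype.sum_prod_type]
  refine Finset.sum_le_sum fun i _ => ?_
  rw [Finset.sum_coe_sort F fun p => ‖ξ i p‖ ^ 2]
  have h := lp.hasSum_norm (p := 2) (by norm_num) (ξ i)
  simp only [ENNReal.toReal_ofNat, Real.rpow_ofNat] at h
  exact sum_le_hasSum F (fun _ _ => by positivity) h

variable {H : Type*} [NormedAddCommGroup H] [InnerProductSpace ℂ H] {G : Type*} [Group G]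
variable {ν : Type*}

local notation "ℓ²" => lp (fun _ : G => H) 2
local notation "𝔹" => lp (fun _ : G => H) 2 →L[ℂ] lp (fun _ : G => H) 2

/-- The `ν`-tuple of vectors of `ℓ²(G, H)` supported on the translate `F * u`, with
`i`-th member taking the value `v (i, p)` at `p * u`. -/
def spread (F : Finset G) (u : G) (v : ν × F → H) : PiLp 2 fun _ : ν => ℓ² :=
  WithLp.toLp 2 fun i => ∑ p : F, lpSingle ((p : G) * u) (v (i, p))

theorem spread_apply_apply (F : Finset G) (u : G) (v : ν × F → H) (i : ν) (p : F) :
    spread F u v i ((p : G) * u) = v (i, p) := by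
  change lpEval ((p : G) * u) (∑ q : F, lpSingle ((q : G) * u) (v (i, q))) = _
  rw [map_sum, Finset.sum_eq_single_of_mem p (Finset.mem_univ p)]
  · exact lpSingle_apply_self _ _
  · exact fun q _ hqp => lpSingle_apply_of_ne
      (fun h => hqp (Subtype.ext (mul_right_cancel h).symm)) _

variable [Fintype ν]

theorem inner_spread (F : Finset G) (u : G) (v : ν × F → H) (ξ : PiLp 2 fun _ : ν => ℓ²) :
    inner ℂ (spread F u v) ξ = ∑ k, inner ℂ (v k) (ξ k.1 ((k.2 : G) * u)) := by
  rw [PiLp.inner_apply, Fintype.sum_prod_type]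
  refine Finset.sum_congr rfl fun i _ => ?_
  exact (sum_inner _ _ _).trans (Finset.sum_congr rfl fun p _ => inner_lpSingle_left _ _ _)

theorem norm_spread_sq (F : Finset G) (u : G) (v : ν × F → H) :
    ‖spread F u v‖ ^ 2 = ∑ k, ‖v k‖ ^ 2 := by
  have h := inner_spread F u v (spread F u v)
  simp only [spread_apply_apply, inner_self_eq_norm_sq_to_K] at h
  exact_mod_cast h

theorem inner_spread_matOp_spread (M : Matrix ν ν 𝔹) (F : Finset G) (u : G) (v w : ν × F → H) :
    inner ℂ (spread F u v) (matOp M (spread F u w)) =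
      ∑ k, ∑ l, inner ℂ (v k) (entry ((k.2 : G) * u) ((l.2 : G) * u) (M k.1 l.1) (w l)) := by
  rw [inner_spread]
  refine Finset.sum_congr rfl fun k _ => ?_
  rw [← inner_sum, Fintype.sum_prod_type]
  change inner ℂ (v k) (lpEval _ (matOp M (spread F u w) k.1)) = _
  rw [matOp_apply, map_sum]
  congr 1
  refine Finset.sum_congr rfl fun j _ => ?_
  change lpEval _ (M k.1 j (∑ q : F, lpSingle ((q : G) * u) (w (j, q)))) = _
  rw [map_sum, map_sum]
  rfl

theorem hasSum_norm_spread_sq (F : Finset G) (ξ : PiLp 2 fun _ : ν × F => ℓ²) :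
    HasSum (fun u => ‖spread F u fun k => ξ k ((k.2 : G) * u)‖ ^ 2) (‖ξ‖ ^ 2) := by
  simp only [norm_spread_sq]
  rw [PiLp.norm_sq_eq_of_L2]
  exact hasSum_sum fun k _ => hasSum_norm_sq_mul_left (ξ k) k.2

variable [CompleteSpace H] {A : Type*} [NonUnitalCStarAlgebra A]
variable (ι : A →⋆ₙₐ[ℂ] (H →L[ℂ] H)) (α : G → A ≃⋆ₐ[ℂ] A)
variable (E : (lp (fun _ : G => H) 2 →L[ℂ] lp (fun _ : G => H) 2) →ₗ[ℂ] A)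

/-- The Fourier component `π(E(x λ_s⁻¹)) λ_s` of `x` at `s`, carrying the matrix entries `(p, q)`
of `x` with `p * q⁻¹ = s`. -/
def band (s : G) : 𝔹 →ₗ[ℂ] 𝔹 :=
  LinearMap.mulRight ℂ (lam s) ∘ₗ piRepLin ι α ∘ₗ E ∘ₗ LinearMap.mulRight ℂ (lam s⁻¹)

theorem band_eq (s : G) (x : 𝔹) : band ι α E s x = piRep ι α (E (x * lam s⁻¹)) * lam s := rfl

theorem band_mem (s : G) (x : 𝔹) : band ι α E s x ∈ CrossedSet ι α :=
  piRep_mul_lam_mem ι α _ s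

variable {ι α E}

theorem continuousOn_band (hisom : ∀ a : A, ‖ι a‖ = ‖a‖) (hE : IsCondExp ι α E) (s : G) :
    ContinuousOn (band ι α E s) (CrossedSet ι α) := by
  have hEs : ContinuousOn (fun x => E (x * lam s⁻¹)) (CrossedSet ι α) :=
    (continuousOn_condExp hisom hE).comp (by fun_prop) fun x hx => mul_lam_mem hx s⁻¹
  exact ((continuous_piRep ι α).comp_continuousOn hEs).mul continuousOn_const

theorem band_piRep_mul_lam [DecidableEq G] (hisom : ∀ a : A, ‖ι a‖ = ‖a‖) (hα : IsAction α)
    (hE : IsCondExp ι α E) (t : G) (a : A) (s : G) :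
    band ι α E t (piRep ι α a * lam s) = if s = t then piRep ι α a * lam s else 0 := by
  rw [band_eq, mul_assoc, lam_mul_lam, condExp_piRep_mul_lam hisom hα hE]
  by_cases hst : s = t
  · rw [hst, mul_inv_cancel, if_pos rfl, if_pos rfl]
  · rw [if_neg hst, if_neg (mt mul_inv_eq_one.1 hst),
      show piRep ι α (0 : A) = 0 from map_zero (piRepLin ι α), zero_mul]

theorem entry_band (hisom : ∀ a : A, ‖ι a‖ = ‖a‖) (hα : IsAction α) (hE : IsCondExp ι α E)
    {x : 𝔹} (hx : x ∈ CrossedSet ι α) (p q : G) :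
    entry p q (band ι α E (p * q⁻¹) x) = entry p q x := by
  classical
  refine eqOn_crossedSet (f := (entry p q).toLinearMap ∘ₗ band ι α E (p * q⁻¹))
    (g := (entry p q).toLinearMap)
    ((entry p q).continuous.comp_continuousOn (continuousOn_band hisom hE _))
    (entry p q).continuous.continuousOn (fun a s => ?_) hx
  change entry p q (band ι α E (p * q⁻¹) _) = entry p q _
  rw [band_piRep_mul_lam hisom hα hE]
  split_ifs with hs
  · rfl
  · rw [map_zero, entry_piRep_mul_lam, if_neg (fun hp => hs (eq_mul_inv_of_mul_eq hp.symm))]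

theorem band_apply_apply (hisom : ∀ a : A, ‖ι a‖ = ‖a‖) (hα : IsAction α) (hE : IsCondExp ι α E)
    {x : 𝔹} (hx : x ∈ CrossedSet ι α) (p q u : G) (f : ℓ²) :
    band ι α E (p * q⁻¹) x f (p * u) = entry (p * u) (q * u) x (f (q * u)) := by
  classical
  have hpu : p * u * (q * u)⁻¹ = p * q⁻¹ := by group
  have hqu : (p * q⁻¹)⁻¹ * (p * u) = q * u := by group
  rw [← entry_band hisom hα hE hx, hpu, band_eq, entry_piRep_mul_lam, if_pos (by group),
    mul_apply_eq_comp, piRep_apply, lam_apply, hqu]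

variable (ι α E) in
/-- The matrix over `ν × F` whose `((i, p), (j, q))` entry is the Fourier component of `M i j` at
`p * q⁻¹`; it is the `F`-section of the image of `M` under the coaction
`π(a) λ_s ↦ π(a) λ_s ⊗ λ_s`. -/
def bandMatrix (F : Finset G) (M : Matrix ν ν 𝔹) : Matrix (ν × F) (ν × F) 𝔹 :=
  fun k l => band ι α E ((k.2 : G) * (l.2 : G)⁻¹) (M k.1 l.1)

theorem hasSum_inner_matOp_spread (hisom : ∀ a : A, ‖ι a‖ = ‖a‖) (hα : IsAction α)
    (hE : IsCondExp ι α E) {M : Matrix ν ν 𝔹} (hM : ∀ i j, M i j ∈ CrossedSet ι α)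
    (F : Finset G) (η ξ : PiLp 2 fun _ : ν × F => ℓ²) :
    HasSum (fun u => inner ℂ (spread F u fun k => η k ((k.2 : G) * u))
        (matOp M (spread F u fun k => ξ k ((k.2 : G) * u))))
      (inner ℂ η (matOp (bandMatrix ι α E F M) ξ)) := by
  have hu (u : G) : inner ℂ (spread F u fun k => η k ((k.2 : G) * u))
      (matOp M (spread F u fun k => ξ k ((k.2 : G) * u))) = ∑ k, ∑ l,
        inner ℂ (η k ((k.2 : G) * u)) (bandMatrix ι α E F M k l (ξ l) ((k.2 : G) * u)) := by
    rw [inner_spread_matOp_spread]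
    refine Finset.sum_congr rfl fun k _ => Finset.sum_congr rfl fun l _ => ?_
    rw [bandMatrix, band_apply_apply hisom hα hE (hM _ _)]
  rw [inner_matOp]
  simp only [hu]
  refine hasSum_sum fun k _ => hasSum_sum fun l _ => ?_
  have h := lp.hasSum_inner (𝕜 := ℂ) (η k) (bandMatrix ι α E F M k l (ξ l))
  rwa [← (Equiv.mulLeft (k.2 : G)).hasSum_iff] at h

theorem matPos_bandMatrix (hisom : ∀ a : A, ‖ι a‖ = ‖a‖) (hα : IsAction α)
    (hE : IsCondExp ι α E) {M : Matrix ν ν 𝔹} (hM : ∀ i j, M i j ∈ CrossedSet ι α)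
    (hpos : MatPos M) (F : Finset G) : MatPos (bandMatrix ι α E F M) := by
  rw [matPos_iff_forall_inner_nonneg] at hpos ⊢
  exact fun ξ => (hasSum_inner_matOp_spread hisom hα hE hM F ξ ξ).nonneg fun u => hpos _

theorem norm_matOp_bandMatrix_le (hisom : ∀ a : A, ‖ι a‖ = ‖a‖) (hα : IsAction α)
    (hE : IsCondExp ι α E) {M : Matrix ν ν 𝔹} (hM : ∀ i j, M i j ∈ CrossedSet ι α)
    (F : Finset G) : ‖matOp (bandMatrix ι α E F M)‖ ≤ ‖matOp M‖ := by
  refine opNorm_le_of_norm_inner_le _ (ContinuousLinearMap.opNorm_nonneg _) fun η ξ => ?_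
  rw [← (hasSum_inner_matOp_spread hisom hα hE hM F η ξ).tsum_eq]
  refine tsum_of_norm_bounded ((((hasSum_norm_spread_sq F η).add
    (hasSum_norm_spread_sq F ξ)).div_const 2).mul_left _) fun u => ?_
  exact norm_inner_apply_le_opNorm _ _ _

end Bands

/-! ### The multiplier of a completely positive map -/

theorem exists_linearMap_continuousOn_closure_range {X B Y : Type*} [AddCommGroup X] [Module ℂ X]
    [NormedAddCommGroup B] [NormedSpace ℂ B] [NormedAddCommGroup Y] [NormedSpace ℂ Y]
    [CompleteSpace Y] (T₀ : X →ₗ[ℂ] B) (T₁ : X →ₗ[ℂ] Y) {C : ℝ}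
    (hT : ∀ f, ‖T₁ f‖ ≤ C * ‖T₀ f‖) :
    ∃ S : B →ₗ[ℂ] Y, (∀ f, S (T₀ f) = T₁ f) ∧ ContinuousOn S (closure (Set.range T₀)) := by
  let V : Submodule ℂ B := (LinearMap.range T₀).topologicalClosure
  let e : X →ₗ[ℂ] V := T₀.codRestrict V fun f =>
    Submodule.le_topologicalClosure _ (LinearMap.mem_range_self T₀ f)
  have hdense : DenseRange e := by
    intro x
    rw [Topology.IsInducing.subtypeVal.closure_eq_preimage_closure_image, ← Set.range_comp]
    exact x.2
  obtain ⟨S, hS⟩ := LinearMap.exists_extend (T₁.extendOfNorm e : V →ₗ[ℂ] Y)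
  refine ⟨S, fun f => ?_, ?_⟩
  · exact (LinearMap.congr_fun hS (e f)).trans (LinearMap.extendOfNorm_eq hdense ⟨C, hT⟩ f)
  · have hV : ContinuousOn S V := by
      rw [continuousOn_iff_continuous_domRestrict]
      exact (T₁.extendOfNorm e).continuous.congr fun x => (LinearMap.congr_fun hS x).symm
    exact hV

section SchurImage

variable {H : Type*} [NormedAddCommGroup H] [InnerProductSpace ℂ H] {G : Type*} [Group G]
variable {ν : Type*}

local notation "ℓ²" => lp (fun _ : G => H) 2
local notation "𝔹" => lp (fun _ : G => H) 2 →L[ℂ] lp (fun _ : G => H) 2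

theorem tendsto_spread_one (ξ : PiLp 2 fun _ : ν => ℓ²) :
    Filter.Tendsto (fun F : Finset G => spread F 1 fun k => ξ k.1 k.2) Filter.atTop (nhds ξ) := by
  classical
  rw [(PiLp.homeomorph 2 fun _ : ν => ℓ²).isInducing.tendsto_nhds_iff, tendsto_pi_nhds]
  intro i
  have h := lp.hasSum_single (E := fun _ : G => H) (p := 2) (by norm_num) (ξ i)
  refine Filter.Tendsto.congr (fun F => ?_) h
  change _ = ∑ p : F, lpSingle ((p : G) * 1) (ξ i p)
  rw [← Finset.sum_coe_sort F]
  refine Finset.sum_congr rfl fun p _ => ?_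
  rw [mul_one]
  rfl

variable [Fintype ν] [CompleteSpace H] {A : Type*} [NonUnitalCStarAlgebra A]
variable (ι : A →⋆ₙₐ[ℂ] (H →L[ℂ] H)) (α : G → A ≃⋆ₐ[ℂ] A)
variable (E : (lp (fun _ : G => H) 2 →L[ℂ] lp (fun _ : G => H) 2) →ₗ[ℂ] A)
variable (Φ : (lp (fun _ : G => H) 2 →L[ℂ] lp (fun _ : G => H) 2) →ₗ[ℂ]
  (lp (fun _ : G => H) 2 →L[ℂ] lp (fun _ : G => H) 2))

/-- `y` is the image of `x` under the Schur-type multiplication by `h_Φ`, expressed through matrix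
entries so that it makes sense before the map `S_{h_Φ}` is known to be bounded. -/
def IsSchurImage (x y : 𝔹) : Prop :=
  ∀ p q, entry p q y = entry p q (Φ (band ι α E (p * q⁻¹) x))

variable {ι α E Φ}

theorem CPOnCrossed.isCPOn (hΦ : CPOnCrossed ι α Φ) (hα : IsAction α) :
    IsCPOn (crossedAlgebra ι hα) Φ := hΦ.2

theorem isSchurImage_piRep_mul_lam (hisom : ∀ a : A, ‖ι a‖ = ‖a‖) (hα : IsAction α)
    (hE : IsCondExp ι α E) (hΦ : CPOnCrossed ι α Φ) (a : A) (s : G) :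
    IsSchurImage ι α E Φ (piRep ι α a * lam s) (piRep ι α (hMap ι α E Φ s a) * lam s) := by
  classical
  intro p q
  rw [band_piRep_mul_lam hisom hα hE]
  split_ifs with hs
  · rw [← entry_band hisom hα hE (hΦ.1 _ (piRep_mul_lam_mem ι α a s)), ← hs, band_eq, ← star_lam]
    rfl
  · rw [map_zero, map_zero, entry_piRep_mul_lam,
      if_neg fun hp => hs (eq_mul_inv_of_mul_eq hp.symm)]

theorem inner_spread_matOp_spread_of_isSchurImage {M N : Matrix ν ν 𝔹}
    (hMN : ∀ i j, IsSchurImage ι α E Φ (M i j) (N i j)) (F : Finset G) (v w : ν × F → H) :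
    inner ℂ (spread F 1 v) (matOp N (spread F 1 w)) =
      inner ℂ (WithLp.toLp 2 fun k => lpSingle (k.2 : G) (v k))
        (matOp ((bandMatrix ι α E F M).map Φ)
          (WithLp.toLp 2 fun k => lpSingle (k.2 : G) (w k))) := by
  rw [inner_spread_matOp_spread, inner_matOp]
  refine Finset.sum_congr rfl fun k _ => Finset.sum_congr rfl fun l _ => ?_
  rw [mul_one, mul_one, hMN, inner_lpSingle_left]
  rfl

theorem matPos_of_isSchurImage (hisom : ∀ a : A, ‖ι a‖ = ‖a‖) (hα : IsAction α)
    (hE : IsCondExp ι α E) (hΦ : CPOnCrossed ι α Φ) {M N : Matrix ν ν 𝔹}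
    (hM : ∀ i j, M i j ∈ CrossedSet ι α)
    (hMN : ∀ i j, IsSchurImage ι α E Φ (M i j) (N i j)) (hpos : MatPos M) : MatPos N := by
  rw [matPos_iff_forall_inner_nonneg]
  intro ξ
  have hlim := (tendsto_spread_one ξ).inner (𝕜 := ℂ)
    (((matOp N).continuous.tendsto ξ).comp (tendsto_spread_one ξ))
  refine ge_of_tendsto' hlim fun F => ?_
  have hband := (hΦ.isCPOn hα).matPos_map (fun k l => band_mem ι α E _ _)
    (matPos_bandMatrix hisom hα hE hM hpos F)
  exact ((matPos_iff_forall_inner_nonneg _).1 hband _).trans_eq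
    (inner_spread_matOp_spread_of_isSchurImage hMN F _ _).symm

theorem norm_matOp_le_of_isSchurImage (hisom : ∀ a : A, ‖ι a‖ = ‖a‖) (hα : IsAction α)
    (hE : IsCondExp ι α E) (hΦ : CPOnCrossed ι α Φ) {C : ℝ} (hC₀ : 0 ≤ C)
    (hC : ∀ x ∈ CrossedSet ι α, ‖Φ x‖ ≤ C * ‖x‖) {M N : Matrix ν ν 𝔹}
    (hM : ∀ i j, M i j ∈ CrossedSet ι α)
    (hMN : ∀ i j, IsSchurImage ι α E Φ (M i j) (N i j)) :
    ‖matOp N‖ ≤ 6 * C * ‖matOp M‖ := by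
  have hD : 0 ≤ 6 * C * ‖matOp M‖ :=
    mul_nonneg (by positivity) (ContinuousLinearMap.opNorm_nonneg _)
  refine opNorm_le_of_norm_inner_le _ hD fun η ξ => ?_
  have hlim := ((tendsto_spread_one η).inner (𝕜 := ℂ)
    (((matOp N).continuous.tendsto ξ).comp (tendsto_spread_one ξ))).norm
  refine le_of_tendsto' hlim fun F => ?_
  have hsingles (ζ : PiLp 2 fun _ : ν => ℓ²) :
      ‖(WithLp.toLp 2 fun k : ν × F => lpSingle (k.2 : G) (ζ k.1 k.2) :
        PiLp 2 fun _ : ν × F => ℓ²)‖ ≤ ‖ζ‖ := by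
    rw [← sq_le_sq₀ (norm_nonneg _) (norm_nonneg _), PiLp.norm_sq_eq_of_L2]
    simpa only [norm_lpSingle] using sum_norm_apply_sq_le F ζ
  have hband : ‖matOp ((bandMatrix ι α E F M).map Φ)‖ ≤ 6 * C * ‖matOp M‖ := by
    refine ((hΦ.isCPOn hα).norm_matOp_map_le hC₀ hC fun k l => band_mem ι α E _ _).trans ?_
    gcongr
    exact norm_matOp_bandMatrix_le hisom hα hE hM F
  refine (congrArg norm (inner_spread_matOp_spread_of_isSchurImage hMN F _ _)).trans_le ?_
  refine (norm_inner_apply_le_opNorm _ _ _).trans ?_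
  gcongr
  exacts [hsingles η, hsingles ξ]

theorem norm_le_of_isSchurImage (hisom : ∀ a : A, ‖ι a‖ = ‖a‖) (hα : IsAction α)
    (hE : IsCondExp ι α E) (hΦ : CPOnCrossed ι α Φ) {C : ℝ} (hC₀ : 0 ≤ C)
    (hC : ∀ x ∈ CrossedSet ι α, ‖Φ x‖ ≤ C * ‖x‖) {x y : 𝔹} (hx : x ∈ CrossedSet ι α)
    (hxy : IsSchurImage ι α E Φ x y) : ‖y‖ ≤ 6 * C * ‖x‖ := by
  let diag (z : 𝔹) : Matrix Unit Unit 𝔹 := Matrix.diagonal fun _ => z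
  have hdiag := norm_matOp_le_of_isSchurImage hisom hα hE hΦ hC₀ hC (M := diag x) (N := diag y)
    (fun _ _ => hx) (fun _ _ => hxy)
  calc ‖y‖ ≤ ‖matOp (diag y)‖ := norm_entry_le_norm_matOp (diag y) () ()
    _ ≤ 6 * C * ‖matOp (diag x)‖ := hdiag
    _ ≤ 6 * C * ‖x‖ := by gcongr; exact norm_matOp_diagonal_le x

variable (ι α) in
/-- The operator `π̃(F · f) = ∑ s, π(F(s)(f(s))) λ_s` for finitely supported `f : G → A`. -/
def crossedSum (F : G → A →ₗ[ℂ] A) : (G →₀ A) →ₗ[ℂ] 𝔹 :=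
  Finsupp.lsum ℂ fun s => LinearMap.mulRight ℂ (lam s) ∘ₗ piRepLin ι α ∘ₗ F s

theorem crossedSum_single (F : G → A →ₗ[ℂ] A) (s : G) (a : A) :
    crossedSum ι α F (Finsupp.single s a) = piRep ι α (F s a) * lam s :=
  Finsupp.lsum_single _ _ _ _

theorem crossedSum_mem (F : G → A →ₗ[ℂ] A) (f : G →₀ A) :
    crossedSum ι α F f ∈ CrossedSet ι α :=
  subset_closure <| Submodule.sum_mem _ fun s _ => Submodule.subset_span ⟨F s (f s), s, rfl⟩

theorem crossedSet_subset_closure_range_crossedSum :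
    CrossedSet ι α ⊆ closure (Set.range (crossedSum ι α fun _ => LinearMap.id)) := by
  refine closure_mono (Submodule.span_le (p := LinearMap.range _).2 ?_)
  rintro _ ⟨a, s, rfl⟩
  exact ⟨Finsupp.single s a, crossedSum_single _ s a⟩

theorem isSchurImage_of_continuousOn (hisom : ∀ a : A, ‖ι a‖ = ‖a‖) (hα : IsAction α)
    (hE : IsCondExp ι α E) (hΦ : CPOnCrossed ι α Φ) {S : 𝔹 →ₗ[ℂ] 𝔹}
    (hS : HSGenProp ι α (hMap ι α E Φ) S) (hcont : ContinuousOn S (CrossedSet ι α))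
    {x : 𝔹} (hx : x ∈ CrossedSet ι α) : IsSchurImage ι α E Φ x (S x) := by
  intro p q
  have hΦband : ContinuousOn (fun x => Φ (band ι α E (p * q⁻¹) x)) (CrossedSet ι α) :=
    (hΦ.isCPOn hα).continuousOn.comp (continuousOn_band hisom hE _) fun x _ => band_mem ι α E _ x
  refine eqOn_crossedSet (f := (entry p q).toLinearMap ∘ₗ S)
    (g := (entry p q).toLinearMap ∘ₗ Φ ∘ₗ band ι α E (p * q⁻¹))
    ((entry p q).continuous.comp_continuousOn hcont)
    ((entry p q).continuous.comp_continuousOn hΦband) (fun a s => ?_) hx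
  change entry p q (S _) = _
  rw [hS]
  exact isSchurImage_piRep_mul_lam hisom hα hE hΦ a s p q

theorem isSchurImage_crossedSum (hisom : ∀ a : A, ‖ι a‖ = ‖a‖) (hα : IsAction α)
    (hE : IsCondExp ι α E) (hΦ : CPOnCrossed ι α Φ) (f : G →₀ A) :
    IsSchurImage ι α E Φ (crossedSum ι α (fun _ => LinearMap.id) f)
      (crossedSum ι α (hMap ι α E Φ) f) := by
  intro p q
  induction f using Finsupp.induction_linear with
  | zero => simp only [map_zero]
  | add f g hf hg => simp only [map_add, hf, hg]
  | single s a =>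
    rw [crossedSum_single, crossedSum_single]
    exact isSchurImage_piRep_mul_lam hisom hα hE hΦ a s p q

theorem exists_hsGenProp_continuousOn (hisom : ∀ a : A, ‖ι a‖ = ‖a‖) (hα : IsAction α)
    (hE : IsCondExp ι α E) (hΦ : CPOnCrossed ι α Φ) :
    ∃ S, HSGenProp ι α (hMap ι α E Φ) S ∧ ContinuousOn S (CrossedSet ι α) ∧
      Set.MapsTo S (CrossedSet ι α) (CrossedSet ι α) := by
  obtain ⟨C, hC₀, hC⟩ := (hΦ.isCPOn hα).exists_norm_le
  have hbound (f : G →₀ A) : ‖crossedSum ι α (hMap ι α E Φ) f‖ ≤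
      6 * C * ‖crossedSum ι α (fun _ => LinearMap.id) f‖ :=
    norm_le_of_isSchurImage hisom hα hE hΦ hC₀ hC (crossedSum_mem _ f)
      (isSchurImage_crossedSum hisom hα hE hΦ f)
  obtain ⟨S, hS, hcont⟩ := exists_linearMap_continuousOn_closure_range _ _ hbound
  have hmaps : Set.MapsTo S (Set.range (crossedSum ι α fun _ => LinearMap.id))
      (CrossedSet ι α) := by
    rintro _ ⟨f, rfl⟩
    exact (hS f).symm ▸ crossedSum_mem _ f
  refine ⟨S, fun a s => ?_, hcont.mono crossedSet_subset_closure_range_crossedSum, fun x hx => ?_⟩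
  · have h := hS (Finsupp.single s a)
    rwa [crossedSum_single, crossedSum_single] at h
  · have h := hmaps.closure_of_continuousOn hcont (crossedSet_subset_closure_range_crossedSum hx)
    exact isClosed_closure.closure_subset h

end SchurImage

theorem hMap_of_CP_is_herzSchurCP_general
    {H : Type*} [NormedAddCommGroup H] [InnerProductSpace ℂ H] [CompleteSpace H]
    {A : Type*} [NonUnitalCStarAlgebra A] {G : Type*} [Group G]
    (ι : A →⋆ₙₐ[ℂ] (H →L[ℂ] H)) (hisom : ∀ a : A, ‖ι a‖ = ‖a‖)
    (α : G → A ≃⋆ₐ[ℂ] A) (hα : IsAction α)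
    (E : (lp (fun _ : G => H) 2 →L[ℂ] lp (fun _ : G => H) 2) →ₗ[ℂ] A)
    (hE : IsCondExp ι α E)
    (Φ : (lp (fun _ : G => H) 2 →L[ℂ] lp (fun _ : G => H) 2) →ₗ[ℂ]
         (lp (fun _ : G => H) 2 →L[ℂ] lp (fun _ : G => H) 2))
    (hΦ : CPOnCrossed ι α Φ) :
    IsHerzSchurMultiplierCP ι α (hMap ι α E Φ) := by
  obtain ⟨S, hgen, hcont, hmaps⟩ := exists_hsGenProp_continuousOn hisom hα hE hΦ
  obtain ⟨C, hC₀, hC⟩ := (hΦ.isCPOn hα).exists_norm_le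
  have hS {x} (hx : x ∈ CrossedSet ι α) : IsSchurImage ι α E Φ x (S x) :=
    isSchurImage_of_continuousOn hisom hα hE hΦ hgen hcont hx
  have hpos : CPOnCrossed ι α S := ⟨hmaps, fun n M hM hMpos =>
    matPos_of_isSchurImage hisom hα hE hΦ hM (fun i j => hS (hM i j)) hMpos⟩
  have hcb : CBBoundOnCrossed ι α S (6 * C) := fun n M hM =>
    norm_matOp_le_of_isSchurImage hisom hα hE hΦ hC₀ hC hM fun i j => hS (hM i j)
  exact ⟨S, hgen, hpos, 6 * C, by positivity, hcb⟩

/-- **Proposition 3.4.** If `Φ` is a completely positive map on `A ⋊_{α,r} G`, then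
`h_Φ : G → B(A)`, `h_Φ(s)(a) = E(Φ(π(a)λ_s)λ_s*)`, is a completely positive Herz-Schur
`(A,G,α)`-multiplier. -/
theorem hMap_of_CP_is_herzSchurCP
    {H : Type*} [NormedAddCommGroup H] [InnerProductSpace ℂ H] [CompleteSpace H]
    {A : Type*} [NonUnitalCStarAlgebra A] {G : Type*} [Group G]
    (ι : A →⋆ₙₐ[ℂ] (H →L[ℂ] H)) (hisom : ∀ a : A, ‖ι a‖ = ‖a‖)
    (hnd : NondegenerateRep ι)
    (α : G → A ≃⋆ₐ[ℂ] A) (hα : IsAction α)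
    (E : (lp (fun _ : G => H) 2 →L[ℂ] lp (fun _ : G => H) 2) →ₗ[ℂ] A)
    (hE : IsCondExp ι α E)
    (Φ : (lp (fun _ : G => H) 2 →L[ℂ] lp (fun _ : G => H) 2) →ₗ[ℂ]
         (lp (fun _ : G => H) 2 →L[ℂ] lp (fun _ : G => H) 2))
    (hΦ : CPOnCrossed ι α Φ) :
    IsHerzSchurMultiplierCP ι α (hMap ι α E Φ) := by
  exact hMap_of_CP_is_herzSchurCP_general ι hisom α hα E hE Φ hΦ

end
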